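/- Let n ≥ 2 and let (M,g) = (ℝ^n, g, o) be an asymptotically conical manifold with opening angle α ∈ (0,π/2) \ {arcsin(1/(2k+1)) : k ∈ ℕ} and asymptotic decay rate μ > 0, with proper exponential map at every point; let ε, κ be as in the context, fix a ∈ S^{n−1}, and for ρ > R_κ let Γ_ρ : [0, ℓ_g(Γ_ρ)] → M be the arc-length-parametrised min-max geodesic segment joining p = ρa and q = −ρa, with C_minmax := sup_{ρ>R_κ} dist(Γ_ρ, o) < ∞. For r > C_minmax and ρ > max{R_κ, r} set t⁻_{ρ,r} := min{t : |Γ_ρ(t)| = r} and t⁺_{ρ,r} := max{t : |Γ_ρ(t)| = r}. Then for every δ > 0 there exists R_δ ≥ max{R_κ, C_minmax} such that for all r > R_δ and all ρ > r, |Γ_ρ(t⁻_{ρ,r})/r − a| + |Γ_ρ(t⁺_{ρ,r})/r + a| ≤ δ; that is, the first entry and last exit points of Γ_ρ on the sphere of radius r asymptotically align with the antipodal directions a and −a, uniformly in ρ. -/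

import Mathlib

/-!
A geodesic of the distance `d_g` is only given metrically, so it is first shown to be `C¹` with a
differentiable momentum `g(γ̇, ·)`: locally it minimises the energy, and testing the first variation
against variations vanishing at the ends (du Bois-Reymond) yields the geodesic equation in momentum
form, `d/dt g(γ̇, ·) = ½ Dg(·)(γ̇, γ̇)`.

Far from the origin this equation is a perturbation of the geodesic equation of the cone, with
errors controlled by `|x|^{-ν}`. The momentum of the radial field `x` has derivative at least `1/2`,
so `|γ|` grows linearly once the geodesic has left a large ball for good. The momentum of a rotation
field `B x`, `B` skew, is conserved on the cone, hence is `O(t^{1-ν})` here. The angular velocity is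
therefore `O(t^{-1-ν})`, so the direction `γ / |γ|` varies by at most `O(r^{-ν})` after the last
exit from the sphere of radius `r`, whatever the length of the geodesic.
-/

open scoped RealInnerProductSpace
open Real Set Filter

noncomputable section

/-- Euclidean `n`-space. -/
abbrev En (n : ℕ) : Type := EuclideanSpace ℝ (Fin n)

/-- A (pointwise) metric tensor on `ℝⁿ`: to each point it assigns a bilinear form,
recorded simply as an `ℝ`-valued function of two tangent vectors (tangent spaces being
identified with `ℝⁿ`). -/
abbrev MetricTensor (n : ℕ) : Type := En n → En n → En n → ℝ

/-- The standard cone metric `g_{C_α^n}` of opening angle `α`, written in Cartesian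
coordinates on `ℝⁿ \ {0}`:  `g_{C_α^n} = (1 - sin²α)·dρ⊗dρ + sin²α·(euclidean metric)`,
where `dρ(v) = ⟪v, x/‖x‖⟫`; this is `dρ⊗dρ + ρ² sin²α · g_{S^{n-1}}` in polar
coordinates. -/
def coneMetric (n : ℕ) (α : ℝ) : MetricTensor n := fun x v w =>
  (1 - Real.sin α ^ 2) * (⟪v, x⟫ * ⟪w, x⟫ / ‖x‖ ^ 2) + Real.sin α ^ 2 * ⟪v, w⟫

variable {n : ℕ}

/-- Length of a curve on `[a,b]` with respect to a metric tensor. -/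
def clen (G : MetricTensor n) (γ : ℝ → En n) (a b : ℝ) : ℝ :=
  ∫ t in a..b, Real.sqrt (G (γ t) (deriv γ t) (deriv γ t))

/-- Energy of a curve on `[a,b]` with respect to a metric tensor. -/
def cenergy (G : MetricTensor n) (γ : ℝ → En n) (a b : ℝ) : ℝ :=
  ∫ t in a..b, G (γ t) (deriv γ t) (deriv γ t)

/-- The Riemannian (length) distance induced by a metric tensor:
the infimum of lengths of `C¹` curves joining the two points. -/
def rdist (G : MetricTensor n) (x y : En n) : ℝ :=
  sInf {L : ℝ | ∃ γ : ℝ → En n, ContDiff ℝ 1 γ ∧ γ 0 = x ∧ γ 1 = y ∧ L = clen G γ 0 1}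

/-- The intrinsic (induced length) distance of the subset `S` for the metric tensor `G`:
the infimum of lengths of `C¹` curves joining the two points inside `S`. -/
def rdistIn (G : MetricTensor n) (S : Set (En n)) (x y : En n) : ℝ :=
  sInf {L : ℝ | ∃ γ : ℝ → En n, ContDiff ℝ 1 γ ∧ (∀ t ∈ Set.Icc (0:ℝ) 1, γ t ∈ S) ∧
    γ 0 = x ∧ γ 1 = y ∧ L = clen G γ 0 1}

/-- `γ`, restricted to the parameter set `I`, is a geodesic of the distance `d` with
constant speed `c`: locally it is a homothety of factor `c` (for `c = 1` this is a local
isometry, i.e. the arc-length parametrisation). -/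
def IsGeodesicOn (d : En n → En n → ℝ) (γ : ℝ → En n) (c : ℝ) (I : Set ℝ) : Prop :=
  ∀ t ∈ I, ∃ δ > 0, ∀ s ∈ I, ∀ u ∈ I, |s - t| < δ → |u - t| < δ →
    d (γ s) (γ u) = c * |s - u|

/-- A length-minimising geodesic segment from `p` to `q`, parametrised on `[0,1]`
with constant speed `d p q`. -/
def IsMinSeg (d : En n → En n → ℝ) (γ : ℝ → En n) (p q : En n) : Prop :=
  γ 0 = p ∧ γ 1 = q ∧
    ∀ s ∈ Set.Icc (0:ℝ) 1, ∀ u ∈ Set.Icc (0:ℝ) 1, d (γ s) (γ u) = d p q * |s - u|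

/-- The distance of the standard cone `C_α^n`. -/
def coneDist (n : ℕ) (α : ℝ) : En n → En n → ℝ := rdist (coneMetric n α)

/-- `(ℝⁿ, g)` is an asymptotically conical `C²` Riemannian manifold with opening
angle `α` and asymptotic decay rate `μ`: `g` is a complete `C²` Riemannian metric and
`A := g - g_{C_α^n}` has components whose derivatives of order `k ≤ 2` are
`O(|x|^{-μ-k})` at infinity. -/
structure IsAsympConical (n : ℕ) (g : MetricTensor n) (α μ : ℝ) : Prop where
  symm : ∀ x v w, g x v w = g x w v
  add_left : ∀ x v w u, g x (v + w) u = g x v u + g x w u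
  smul_left : ∀ x (a : ℝ) v u, g x (a • v) u = a * g x v u
  posdef : ∀ x v, v ≠ 0 → 0 < g x v v
  reg : ∀ i j : Fin n, ContDiff ℝ 2
    (fun x => g x (EuclideanSpace.single i 1) (EuclideanSpace.single j 1))
  decay : ∀ i j : Fin n, ∃ C R : ℝ, 0 < C ∧ ∀ x : En n, R ≤ ‖x‖ → ∀ k : ℕ, k ≤ 2 →
    ‖iteratedFDeriv ℝ k (fun y =>
        g y (EuclideanSpace.single i 1) (EuclideanSpace.single j 1) -
        coneMetric n α y (EuclideanSpace.single i 1) (EuclideanSpace.single j 1)) x‖ ≤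
      C * ‖x‖ ^ (-μ - (k : ℝ))
  complete : ∀ u : ℕ → En n,
    (∀ ε > 0, ∃ N, ∀ m ≥ N, ∀ k ≥ N, rdist g (u m) (u k) < ε) →
    ∃ x, ∀ ε > 0, ∃ N, ∀ m ≥ N, rdist g (u m) x < ε

/-- `ex` is the exponential map of the metric tensor `g` at the point `x`
(tangent spaces being identified with `ℝⁿ`): `ex v = γ_v(1)` where `γ_v` is the
constant-speed geodesic with `γ_v(0) = x`, `γ̇_v(0) = v`. -/
def IsExpAt (g : MetricTensor n) (x : En n) (ex : En n → En n) : Prop :=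
  ∀ v : En n, ∃ γ : ℝ → En n, γ 0 = x ∧ deriv γ 0 = v ∧
    IsGeodesicOn (rdist g) γ (Real.sqrt (g x v v)) Set.univ ∧ ex v = γ 1

/-- The exponential map of `g` exists and is proper at every point: preimages of
compact sets are compact. -/
def ProperExpAll (g : MetricTensor n) : Prop :=
  ∀ x : En n, ∃ ex : En n → En n, IsExpAt g x ex ∧
    ∀ K : Set (En n), IsCompact K → IsCompact (ex ⁻¹' K)

/-- Second variation of the energy of `γ` on `[a,b]` along the variation field `V`
(using the global chart to form the variation `γ + s·V`). -/
def secondVar (g : MetricTensor n) (γ V : ℝ → En n) (a b : ℝ) : ℝ :=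
  iteratedDeriv 2 (fun s : ℝ => cenergy g (fun t => γ t + s • V t) a b) 0

/-- The Morse index of `γ` on `[a,b]`, as a critical point of the energy, is at most
`m`: every linear space of `C¹` variation fields vanishing at the endpoints on which the
second variation of the energy is negative definite has dimension at most `m`. -/
def MorseIndexLEOn (g : MetricTensor n) (γ : ℝ → En n) (a b : ℝ) (m : ℕ) : Prop :=
  ∀ W : Submodule ℝ (ℝ → En n),
    (∀ V ∈ W, ContDiff ℝ 1 V ∧ V a = 0 ∧ V b = 0) →
    (∀ V ∈ W, V ≠ 0 → secondVar g γ V a b < 0) →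
    Module.rank ℝ W ≤ (m : Cardinal)

end

noncomputable section

open MeasureTheory Topology

set_option maxSynthPendingDepth 3

/-- Continuous bilinear forms on a real normed space. -/
abbrev BilForm (E : Type*) [NormedAddCommGroup E] [NormedSpace ℝ E] : Type _ := E →L[ℝ] E →L[ℝ] ℝ

section BilForm

variable {E : Type*} [NormedAddCommGroup E] [NormedSpace ℝ E]

lemma bilForm_apply_le_sqrt_mul_sqrt {B : BilForm E} (hsymm : ∀ v w, B v w = B w v)
    (hnonneg : ∀ v, 0 ≤ B v v) (v w : E) : B v w ≤ √(B v v) * √(B w w) := by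
  rw [← Real.sqrt_mul (hnonneg v)]
  exact Real.le_sqrt_of_sq_le
    (LinearMap.BilinForm.apply_sq_le_of_symm (B.toLinearMap₁₂ : LinearMap.BilinForm ℝ E) hnonneg
      ⟨hsymm⟩ v w)

lemma sqrt_bilForm_smul (B : BilForm E) (c : ℝ) (v : E) :
    √(B (c • v) (c • v)) = |c| * √(B v v) := by
  rw [map_smul, map_smul, smul_apply, smul_eq_mul, smul_eq_mul, ← mul_assoc,
    Real.sqrt_mul (mul_self_nonneg c), Real.sqrt_mul_self_eq_abs]

lemma abs_bilForm_self_le (B : BilForm E) (v : E) : |B v v| ≤ ‖B‖ * ‖v‖ ^ 2 := by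
  simpa [pow_two, mul_assoc] using B.le_opNorm₂ v v

/-- The inner product as a continuous bilinear form. -/
def euclForm (E : Type*) [NormedAddCommGroup E] [InnerProductSpace ℝ E] : BilForm E := innerSL ℝ

@[simp]
lemma euclForm_apply {E : Type*} [NormedAddCommGroup E] [InnerProductSpace ℝ E] (v w : E) :
    euclForm E v w = ⟪v, w⟫ := rfl

end BilForm

section RiemannianDistance

variable {n : ℕ}

/-- A field of bilinear forms on `ℝⁿ`, viewed as a metric tensor. -/
abbrev asTensor (G : En n → BilForm (En n)) : MetricTensor n := fun x v w => G x v w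

/-- A continuous Riemannian metric on `ℝⁿ`, as a field of bilinear forms. Higher regularity of the
metric is assumed separately where it is needed. -/
structure IsRiemannian (G : En n → BilForm (En n)) : Prop where
  continuous : Continuous G
  symm : ∀ x v w, G x v w = G x w v
  pos : ∀ x v, v ≠ 0 → 0 < G x v v

variable {G : En n → BilForm (En n)}

lemma IsRiemannian.nonneg (hG : IsRiemannian G) (x v : En n) : 0 ≤ G x v v := by
  rcases eq_or_ne v 0 with rfl | hv
  · simp
  · exact (hG.pos x v hv).le

lemma IsRiemannian.continuous_apply_self (hG : IsRiemannian G) {X : Type*} [TopologicalSpace X]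
    {x v : X → En n} (hx : Continuous x) (hv : Continuous v) :
    Continuous fun t => G (x t) (v t) (v t) :=
  ((hG.continuous.comp hx).clm_apply hv).clm_apply hv

lemma clen_comp (hG : IsRiemannian G) {σ : ℝ → En n} (hσ : ContDiff ℝ 1 σ) {φ : ℝ → ℝ}
    (hφ : ContDiff ℝ 1 φ) (hmono : Monotone φ) (a b : ℝ) :
    clen (asTensor G) (σ ∘ φ) a b = clen (asTensor G) σ (φ a) (φ b) := by
  have hderiv : ∀ t, deriv (σ ∘ φ) t = deriv φ t • deriv σ (φ t) := fun t =>
    ((hσ.differentiable one_ne_zero _).hasDerivAt.scomp t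
      (hφ.differentiable one_ne_zero t).hasDerivAt).deriv
  have hspeed : Continuous fun t => √(G (σ t) (deriv σ t) (deriv σ t)) :=
    (hG.continuous_apply_self hσ.continuous (hσ.continuous_deriv le_rfl)).sqrt
  unfold clen
  rw [← intervalIntegral.integral_comp_mul_deriv
    (fun t _ => (hφ.differentiable one_ne_zero t).hasDerivAt)
    (hφ.continuous_deriv le_rfl).continuousOn hspeed]
  refine intervalIntegral.integral_congr fun t _ => ?_
  simp only [asTensor, hderiv, sqrt_bilForm_smul, abs_of_nonneg hmono.deriv_nonneg,
    Function.comp_apply, mul_comm]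

lemma bddBelow_clen (g : MetricTensor n) (x y : En n) : BddBelow
    {L | ∃ γ : ℝ → En n, ContDiff ℝ 1 γ ∧ γ 0 = x ∧ γ 1 = y ∧ L = clen g γ 0 1} := by
  refine ⟨0, ?_⟩
  rintro _ ⟨σ, -, -, -, rfl⟩
  exact intervalIntegral.integral_nonneg zero_le_one fun _ _ => Real.sqrt_nonneg _

lemma rdist_le_clen (g : MetricTensor n) {γ : ℝ → En n} (hγ : ContDiff ℝ 1 γ) :
    rdist g (γ 0) (γ 1) ≤ clen g γ 0 1 :=
  csInf_le (bddBelow_clen g _ _) ⟨γ, hγ, rfl, rfl, rfl⟩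

lemma le_rdist {g : MetricTensor n} {x y : En n} {c : ℝ}
    (h : ∀ γ : ℝ → En n, ContDiff ℝ 1 γ → γ 0 = x → γ 1 = y → c ≤ clen g γ 0 1) :
    c ≤ rdist g x y := by
  refine le_csInf ⟨_, fun t => x + t • (y - x), by fun_prop, by simp, by simp, rfl⟩ ?_
  rintro _ ⟨σ, hσ, h0, h1, rfl⟩
  exact h σ hσ h0 h1

lemma rdist_nonneg (g : MetricTensor n) (x y : En n) : 0 ≤ rdist g x y :=
  le_rdist fun _ _ _ _ => intervalIntegral.integral_nonneg zero_le_one fun _ _ => Real.sqrt_nonneg _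

lemma rdist_self (G : En n → BilForm (En n)) (x : En n) : rdist (asTensor G) x x = 0 := by
  refine le_antisymm ?_ (rdist_nonneg _ x x)
  simpa [clen, asTensor] using rdist_le_clen (asTensor G) (γ := fun _ => x) contDiff_const

lemma clen_congr_Ioo (g : MetricTensor n) {γ σ : ℝ → En n} {a b : ℝ} (hab : a ≤ b)
    (h : EqOn γ σ (Ioo a b)) : clen g γ a b = clen g σ a b := by
  refine intervalIntegral.integral_congr_Ioo_of_le hab fun t ht => ?_
  have heq : γ =ᶠ[𝓝 t] σ := eventually_of_mem (Ioo_mem_nhds ht.1 ht.2) h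
  simp only [heq.eq_of_nhds, heq.deriv_eq]

/-- Since `C¹` curves are not closed under concatenation, both curves are first reparametrised so as
to be constant near the common endpoint. -/
lemma exists_contDiff_concat (hG : IsRiemannian G) {σ₁ σ₂ : ℝ → En n} (hσ₁ : ContDiff ℝ 1 σ₁)
    (hσ₂ : ContDiff ℝ 1 σ₂) (h : σ₁ 1 = σ₂ 0) :
    ∃ γ : ℝ → En n, ContDiff ℝ 1 γ ∧ γ 0 = σ₁ 0 ∧ γ 1 = σ₂ 1 ∧
      clen (asTensor G) γ 0 1 = clen (asTensor G) σ₁ 0 1 + clen (asTensor G) σ₂ 0 1 := by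
  set φ₁ : ℝ → ℝ := fun t => Real.smoothTransition (2 * t) with hφ₁_def
  set φ₂ : ℝ → ℝ := fun t => Real.smoothTransition (2 * t - 1)
  have hφ₁ : ContDiff ℝ 1 φ₁ := Real.smoothTransition.contDiff.comp (by fun_prop)
  have hφ₂ : ContDiff ℝ 1 φ₂ := Real.smoothTransition.contDiff.comp (by fun_prop)
  have hmono₁ : Monotone φ₁ := fun s t hst => Real.smoothTransition.monotone (by linarith)
  have hmono₂ : Monotone φ₂ := fun s t hst => Real.smoothTransition.monotone (by linarith)
  have hφ₁_one : ∀ t, 1 / 2 ≤ t → φ₁ t = 1 := fun t ht =>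
    Real.smoothTransition.one_of_one_le (by linarith)
  have hφ₂_zero : ∀ t ≤ 1 / 2, φ₂ t = 0 := fun t ht =>
    Real.smoothTransition.zero_of_nonpos (by linarith)
  have hφ₁_zero : φ₁ 0 = 0 := by simp [hφ₁_def]
  have hφ₂_one : φ₂ 1 = 1 := Real.smoothTransition.one_of_one_le (by norm_num)
  set γ : ℝ → En n := fun t => σ₁ (φ₁ t) + (σ₂ (φ₂ t) - σ₁ 1)
  have hγ : ContDiff ℝ 1 γ := (hσ₁.comp hφ₁).add ((hσ₂.comp hφ₂).sub contDiff_const)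
  have hfirst : ∀ t ≤ 1 / 2, γ t = σ₁ (φ₁ t) := fun t ht => by simp [γ, hφ₂_zero t ht, h]
  have hsecond : ∀ t, 1 / 2 ≤ t → γ t = σ₂ (φ₂ t) := fun t ht => by simp [γ, hφ₁_one t ht]
  have hspeed : Continuous fun t => √(G (γ t) (deriv γ t) (deriv γ t)) :=
    (hG.continuous_apply_self hγ.continuous (hγ.continuous_deriv le_rfl)).sqrt
  have hlen₁ : clen (asTensor G) γ 0 (1 / 2) = clen (asTensor G) σ₁ 0 1 := by
    rw [clen_congr_Ioo _ (by norm_num) fun t ht => hfirst t ht.2.le]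
    exact (clen_comp hG hσ₁ hφ₁ hmono₁ 0 (1 / 2)).trans (by rw [hφ₁_zero, hφ₁_one _ le_rfl])
  have hlen₂ : clen (asTensor G) γ (1 / 2) 1 = clen (asTensor G) σ₂ 0 1 := by
    rw [clen_congr_Ioo _ (by norm_num) fun t ht => hsecond t ht.1.le]
    exact (clen_comp hG hσ₂ hφ₂ hmono₂ (1 / 2) 1).trans (by rw [hφ₂_one, hφ₂_zero _ le_rfl])
  refine ⟨γ, hγ, by rw [hfirst 0 (by norm_num), hφ₁_zero],
    by rw [hsecond 1 (by norm_num), hφ₂_one], ?_⟩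
  rw [← hlen₁, ← hlen₂]
  exact (intervalIntegral.integral_add_adjacent_intervals (hspeed.intervalIntegrable _ _)
    (hspeed.intervalIntegrable _ _)).symm

lemma rdist_triangle (hG : IsRiemannian G) (x y z : En n) :
    rdist (asTensor G) x z ≤ rdist (asTensor G) x y + rdist (asTensor G) y z := by
  rw [← sub_le_iff_le_add]
  refine le_rdist fun σ₁ hσ₁ h₁0 h₁1 => ?_
  rw [sub_le_comm]
  refine le_rdist fun σ₂ hσ₂ h₂0 h₂1 => ?_
  obtain ⟨γ, hγ, hγ0, hγ1, hlen⟩ := exists_contDiff_concat hG hσ₁ hσ₂ (h₁1.trans h₂0.symm)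
  rw [sub_le_iff_le_add', ← hlen, ← h₁0, ← h₂1, ← hγ0, ← hγ1]
  exact rdist_le_clen _ hγ

end RiemannianDistance

lemma exists_first_hit {f : ℝ → ℝ} {a b c : ℝ} (hf : ContinuousOn f (Icc a b)) (ha : f a ≤ c)
    (h : ∃ t ∈ Icc a b, c ≤ f t) :
    ∃ τ ∈ Icc a b, f τ = c ∧ ∀ t ∈ Icc a τ, f t ≤ c := by
  have hcompact : IsCompact (Icc a b ∩ f ⁻¹' Ici c) :=
    isCompact_Icc.of_isClosed_subset (hf.preimage_isClosed_of_isClosed isClosed_Icc isClosed_Ici)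
      inter_subset_left
  obtain ⟨τ, ⟨hτ, hτc⟩, hmin⟩ := hcompact.exists_isLeast h
  obtain ⟨s, hs, hsc⟩ := intermediate_value_Icc hτ.1 (hf.mono (Icc_subset_Icc_right hτ.2))
    ⟨ha, hτc⟩
  obtain rfl : s = τ := le_antisymm hs.2 (hmin ⟨⟨hs.1, hs.2.trans hτ.2⟩, hsc.ge⟩)
  refine ⟨s, hτ, hsc, fun t ht => ?_⟩
  by_contra! hlt
  exact hlt.ne' (by rw [← hsc, le_antisymm ht.2 (hmin ⟨⟨ht.1, ht.2.trans hτ.2⟩, hlt.le⟩)])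

lemma exists_last_hit {f : ℝ → ℝ} {a b c : ℝ} (hf : ContinuousOn f (Icc a b)) (hb : c ≤ f b)
    (h : ∃ t ∈ Icc a b, f t ≤ c) :
    ∃ τ ∈ Icc a b, f τ = c ∧ ∀ t ∈ Icc τ b, c ≤ f t := by
  have hmem : ∀ {t}, t ∈ Icc a b → -t ∈ Icc (-b) (-a) := fun ht =>
    ⟨neg_le_neg ht.2, neg_le_neg ht.1⟩
  have hcont : ContinuousOn (fun t => -f (-t)) (Icc (-b) (-a)) :=
    (hf.comp continuousOn_neg fun t ht => by simpa using ⟨le_neg.2 ht.2, neg_le.1 ht.1⟩).neg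
  obtain ⟨t, ht, htc⟩ := h
  obtain ⟨τ, hτ, hτc, hstay⟩ := exists_first_hit (c := -c) hcont (by simpa using hb)
    ⟨-t, hmem ht, by simpa using htc⟩
  refine ⟨-τ, ⟨le_neg.2 hτ.2, neg_le.1 hτ.1⟩, neg_injective hτc, fun s hs => ?_⟩
  simpa using hstay (-s) ⟨neg_le_neg hs.2, neg_le.1 hs.1⟩

lemma exists_norm_le_of_continuous {E F : Type*} [NormedAddCommGroup E] [ProperSpace E]
    [NormedAddCommGroup F] {f : E → F} (hf : Continuous f) (R : ℝ) :
    ∃ M, 0 ≤ M ∧ ∀ x, ‖x‖ ≤ R → ‖f x‖ ≤ M := by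
  obtain ⟨M, hM⟩ := (isCompact_closedBall (0 : E) R).exists_bound_of_continuousOn hf.continuousOn
  exact ⟨|M|, abs_nonneg M, fun x hx => (hM x (by simpa using hx)).trans (le_abs_self M)⟩

section LocalComparison

variable {n : ℕ} {G : En n → BilForm (En n)}

lemma IsRiemannian.exists_mul_norm_sq_le (hG : IsRiemannian G) (R : ℝ) :
    ∃ m > 0, ∀ x, ‖x‖ ≤ R → ∀ v, m * ‖v‖ ^ 2 ≤ G x v v := by
  have hcompact : IsCompact (Metric.closedBall (0 : En n) R ×ˢ Metric.sphere (0 : En n) 1) :=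
    (isCompact_closedBall _ _).prod (isCompact_sphere _ _)
  obtain ⟨m, hm, h⟩ := hcompact.exists_forall_le'
    (hG.continuous_apply_self continuous_fst continuous_snd).continuousOn (a := 0)
    fun z hz => hG.pos _ _ (ne_zero_of_mem_unit_sphere ⟨z.2, hz.2⟩)
  refine ⟨m, hm, fun x hx v => ?_⟩
  rcases eq_or_ne v 0 with rfl | hv
  · simp
  have hv' : ‖v‖ ≠ 0 := norm_ne_zero_iff.2 hv
  have hunit := h (x, ‖v‖⁻¹ • v) ⟨by simpa using hx, by simp [norm_smul, hv']⟩
  calc m * ‖v‖ ^ 2 ≤ G x (‖v‖⁻¹ • v) (‖v‖⁻¹ • v) * ‖v‖ ^ 2 := by gcongr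
    _ = G x v v := by simp only [map_smul, smul_apply, smul_eq_mul]; field_simp

lemma IsRiemannian.eventually_abs_sub_le (hG : IsRiemannian G) (x : En n) {ε : ℝ} (hε : 0 < ε) :
    ∀ᶠ z in 𝓝 x, ∀ v, |G z v v - G x v v| ≤ ε * G x v v := by
  obtain ⟨m, hm, hlow⟩ := hG.exists_mul_norm_sq_le ‖x‖
  filter_upwards [Metric.tendsto_nhds.1 hG.continuous.continuousAt (ε * m) (by positivity)]
    with z hz v
  calc |G z v v - G x v v| = |(G z - G x) v v| := by simp
    _ ≤ ‖G z - G x‖ * ‖v‖ ^ 2 := abs_bilForm_self_le _ v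
    _ ≤ ε * m * ‖v‖ ^ 2 := by gcongr; exact (dist_eq_norm (G z) (G x) ▸ hz).le
    _ ≤ ε * G x v v := by rw [mul_assoc]; gcongr; exact hlow x le_rfl v

lemma sqrt_bilForm_sub_le_clen (hG : IsRiemannian G) {B : BilForm (En n)}
    (hsymm : ∀ v w, B v w = B w v) (hnonneg : ∀ v, 0 ≤ B v v) {σ : ℝ → En n}
    (hσ : ContDiff ℝ 1 σ) {a b : ℝ} (hab : a ≤ b)
    (hB : ∀ t ∈ Icc a b, ∀ v, B v v ≤ G (σ t) v v) :
    √(B (σ b - σ a) (σ b - σ a)) ≤ clen (asTensor G) σ a b := by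
  set w := σ b - σ a
  have hderiv : Continuous (deriv σ) := hσ.continuous_deriv le_rfl
  have hspeed : Continuous fun t => √(G (σ t) (deriv σ t) (deriv σ t)) :=
    (hG.continuous_apply_self hσ.continuous hderiv).sqrt
  have hlen : B w w ≤ √(B w w) * clen (asTensor G) σ a b := calc
    B w w = ∫ t in a..b, B w (deriv σ t) := by
      rw [(B w).intervalIntegral_comp_comm (hderiv.intervalIntegrable _ _),
        intervalIntegral.integral_deriv_eq_sub
          (fun t _ => hσ.differentiable one_ne_zero t) (hderiv.intervalIntegrable _ _)]
    _ ≤ ∫ t in a..b, √(B w w) * √(G (σ t) (deriv σ t) (deriv σ t)) := by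
      refine intervalIntegral.integral_mono_on hab
        (((B w).continuous.comp hderiv).intervalIntegrable _ _)
        ((continuous_const.mul hspeed).intervalIntegrable _ _) fun t ht => ?_
      refine (bilForm_apply_le_sqrt_mul_sqrt hsymm hnonneg _ _).trans ?_
      gcongr
      exact hB t ht _
    _ = √(B w w) * clen (asTensor G) σ a b := intervalIntegral.integral_const_mul _ _
  rcases (Real.sqrt_nonneg (B w w)).eq_or_lt with hzero | hpos
  · rw [← hzero]
    exact intervalIntegral.integral_nonneg hab fun _ _ => Real.sqrt_nonneg _
  · exact le_of_mul_le_mul_left ((Real.mul_self_sqrt (hnonneg w)).le.trans hlen) hpos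

/-- A curve from `x` to `y` either stays in the ball or has to reach its boundary. -/
lemma min_le_rdist (hG : IsRiemannian G) {B : BilForm (En n)} (hsymm : ∀ v w, B v w = B w v)
    {m : ℝ} (hm : 0 ≤ m) (hBm : ∀ v, m * ‖v‖ ^ 2 ≤ B v v) {x : En n} {ρ : ℝ} (hρ : 0 ≤ ρ)
    (hB : ∀ z ∈ Metric.closedBall x ρ, ∀ v, B v v ≤ G z v v) (y : En n) :
    min (√(B (y - x) (y - x))) (√m * ρ) ≤ rdist (asTensor G) x y := by
  have hnonneg : ∀ v, 0 ≤ B v v := fun v => le_trans (by positivity) (hBm v)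
  refine le_rdist fun σ hσ h0 h1 => ?_
  have hspeed : Continuous fun t => √(G (σ t) (deriv σ t) (deriv σ t)) :=
    (hG.continuous_apply_self hσ.continuous (hσ.continuous_deriv le_rfl)).sqrt
  by_cases hexit : ∃ t ∈ Icc (0 : ℝ) 1, ρ ≤ dist (σ t) x
  · obtain ⟨τ, hτ, hτρ, hstay⟩ := exists_first_hit (f := fun t => dist (σ t) x)
      (hσ.continuous.dist continuous_const).continuousOn (by simpa [h0] using hρ) hexit
    refine (min_le_right _ _).trans ?_
    calc √m * ρ = √(m * ‖σ τ - σ 0‖ ^ 2) := by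
          rw [h0, ← dist_eq_norm, hτρ, Real.sqrt_mul hm, Real.sqrt_sq hρ]
      _ ≤ √(B (σ τ - σ 0) (σ τ - σ 0)) := Real.sqrt_le_sqrt (hBm _)
      _ ≤ clen (asTensor G) σ 0 τ := sqrt_bilForm_sub_le_clen hG hsymm hnonneg hσ hτ.1
          fun t ht => hB _ (hstay t ht)
      _ ≤ clen (asTensor G) σ 0 1 := intervalIntegral.integral_mono_interval le_rfl hτ.1 hτ.2
          (Eventually.of_forall fun t => Real.sqrt_nonneg _) (hspeed.intervalIntegrable _ _)
  · push Not at hexit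
    refine (min_le_left _ _).trans ?_
    rw [← h0, ← h1]
    exact sqrt_bilForm_sub_le_clen hG hsymm hnonneg hσ zero_le_one
      fun t ht => hB _ (hexit t ht).le

lemma rdist_le_sqrt_bilForm (hG : IsRiemannian G) {B : BilForm (En n)} {s : Set (En n)}
    (hs : Convex ℝ s) (hB : ∀ z ∈ s, ∀ v, G z v v ≤ B v v) {x y : En n} (hx : x ∈ s) (hy : y ∈ s) :
    rdist (asTensor G) x y ≤ √(B (y - x) (y - x)) := by
  set σ : ℝ → En n := fun t => AffineMap.lineMap x y t with hσ_def
  have hσ : ContDiff ℝ 1 σ := by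
    simp only [hσ_def, AffineMap.lineMap_apply_module']
    fun_prop
  have hderiv : ∀ t, deriv σ t = y - x := fun t => AffineMap.hasDerivAt_lineMap.deriv
  calc rdist (asTensor G) x y ≤ clen (asTensor G) σ 0 1 := by
        simpa [hσ_def] using rdist_le_clen (asTensor G) hσ
    _ ≤ ∫ _t in (0 : ℝ)..1, √(B (y - x) (y - x)) := by
        refine intervalIntegral.integral_mono_on zero_le_one ?_ (by simp) fun t ht => ?_
        · exact (hG.continuous_apply_self hσ.continuous
            (hσ.continuous_deriv le_rfl)).sqrt.intervalIntegrable _ _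
        · simp only [asTensor, hderiv]
          exact Real.sqrt_le_sqrt (hB _ (hs.lineMap_mem hx hy ht) _)
    _ = √(B (y - x) (y - x)) := by simp

lemma exists_mul_min_le_rdist (hG : IsRiemannian G) (R : ℝ) :
    ∃ c > 0, ∀ x y, ‖x‖ ≤ R → c * min ‖y - x‖ 1 ≤ rdist (asTensor G) x y := by
  obtain ⟨m, hm, hlow⟩ := hG.exists_mul_norm_sq_le (R + 1)
  refine ⟨√m, Real.sqrt_pos.2 hm, fun x y hx => ?_⟩
  have h := min_le_rdist hG (B := m • euclForm (En n)) (x := x) (ρ := 1)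
    (fun v w => by simp [real_inner_comm]) hm.le (fun v => by simp) zero_le_one
    (fun z hz v => by
      simpa using hlow z ((norm_le_of_mem_closedBall hz).trans (by gcongr)) v) y
  simpa [-map_sub, Real.sqrt_mul hm.le, mul_min_of_nonneg _ _ (Real.sqrt_nonneg m)] using h

lemma exists_rdist_le_mul (hG : IsRiemannian G) (R : ℝ) :
    ∃ M, 0 ≤ M ∧ ∀ x y, ‖x‖ ≤ R → ‖y‖ ≤ R → rdist (asTensor G) x y ≤ M * ‖y - x‖ := by
  obtain ⟨M, hM, hup⟩ := exists_norm_le_of_continuous hG.continuous R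
  refine ⟨√M, Real.sqrt_nonneg M, fun x y hx hy => ?_⟩
  have h := rdist_le_sqrt_bilForm hG (B := M • euclForm (En n)) (convex_closedBall (0 : En n) R)
    (fun z hz v => ?_) (mem_closedBall_zero_iff.2 hx) (mem_closedBall_zero_iff.2 hy)
  · simpa [-map_sub, Real.sqrt_mul hM] using h
  · refine (le_abs_self _).trans ((abs_bilForm_self_le (G z) v).trans ?_)
    simpa using mul_le_mul_of_nonneg_right (hup z (mem_closedBall_zero_iff.1 hz)) (sq_nonneg ‖v‖)

lemma eventually_le_rdist_sq (hG : IsRiemannian G) (x : En n) {ε : ℝ} (hε : 0 < ε) (hε1 : ε ≤ 1) :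
    ∀ᶠ y in 𝓝 x, (1 - ε) * G x (y - x) (y - x) ≤ rdist (asTensor G) x y ^ 2 := by
  obtain ⟨m, hm, hlow⟩ := hG.exists_mul_norm_sq_le ‖x‖
  obtain ⟨ρ, hρ, hball⟩ := Metric.nhds_basis_closedBall.eventually_iff.1
    (hG.eventually_abs_sub_le x hε)
  have hmin := min_le_rdist hG (B := (1 - ε) • G x) (m := (1 - ε) * m)
    (fun v w => by simp [hG.symm x v w]) (by have := sub_nonneg.2 hε1; positivity)
    (fun v => by
      simpa [mul_assoc] using mul_le_mul_of_nonneg_left (hlow x le_rfl v) (sub_nonneg.2 hε1))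
    hρ.le (fun z hz v => by
      have := (abs_le.1 (hball hz v)).1
      simp only [smul_apply, smul_eq_mul]
      linarith)
  rcases hε1.eq_or_lt with rfl | hlt
  · exact Eventually.of_forall fun y => by simpa using sq_nonneg _
  have hnear : ∀ᶠ y in 𝓝 x, √((1 - ε) * G x (y - x) (y - x)) < √((1 - ε) * m) * ρ := by
    have hcont : Continuous fun y => √((1 - ε) * G x (y - x) (y - x)) := by fun_prop
    refine hcont.continuousAt.eventually_lt continuousAt_const ?_
    have := sub_pos.2 hlt
    simp only [sub_self, map_zero, mul_zero, Real.sqrt_zero]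
    positivity
  filter_upwards [hnear] with y hy
  have h := hmin y
  simp only [smul_apply, smul_eq_mul, min_eq_left hy.le] at h
  exact Real.sqrt_le_left (rdist_nonneg _ _ _) |>.1 h

lemma eventually_rdist_sq_le (hG : IsRiemannian G) (x : En n) {ε : ℝ} (hε : 0 < ε) :
    ∀ᶠ y in 𝓝 x, rdist (asTensor G) x y ^ 2 ≤ (1 + ε) * G x (y - x) (y - x) := by
  obtain ⟨ρ, hρ, hball⟩ := Metric.nhds_basis_ball.eventually_iff.1
    (hG.eventually_abs_sub_le x hε)
  filter_upwards [Metric.ball_mem_nhds x hρ] with y hy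
  have h := rdist_le_sqrt_bilForm hG (B := (1 + ε) • G x) (convex_ball x ρ)
    (fun z hz v => by
      have := (abs_le.1 (hball hz v)).2
      simp only [smul_apply, smul_eq_mul]
      linarith) (Metric.mem_ball_self hρ) hy
  refine (Real.le_sqrt (rdist_nonneg _ _ _) ?_).1 h
  simpa using mul_nonneg (by linarith) (hG.nonneg x (y - x))

lemma rdist_sq_sub_isLittleO (hG : IsRiemannian G) (x : En n) :
    (fun y => rdist (asTensor G) x y ^ 2 - G x (y - x) (y - x)) =o[𝓝 x]
      fun y => ‖y - x‖ ^ 2 := by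
  have hO : (fun y => G x (y - x) (y - x)) =O[𝓝 x] fun y => ‖y - x‖ ^ 2 :=
    .of_bound ‖G x‖ (Eventually.of_forall fun y => by
      simpa using abs_bilForm_self_le (G x) (y - x))
  refine Asymptotics.IsLittleO.trans_isBigO ?_ hO
  refine Asymptotics.isLittleO_iff.2 fun ε hε => ?_
  filter_upwards [eventually_le_rdist_sq hG x (lt_min hε one_pos) (min_le_right ε 1),
    eventually_rdist_sq_le hG x hε] with y hlow hup
  have := mul_le_mul_of_nonneg_right (min_le_left ε 1) (hG.nonneg x (y - x))
  rw [Real.norm_eq_abs, Real.norm_of_nonneg (hG.nonneg x _), abs_le]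
  constructor <;> linarith

lemma tendsto_rdist_sq_div (hG : IsRiemannian G) {γ : ℝ → En n} {v : En n} {t : ℝ}
    (hγ : HasDerivAt γ v t) :
    Tendsto (fun s => rdist (asTensor G) (γ t) (γ s) ^ 2 / (s - t) ^ 2) (𝓝[≠] t)
      (𝓝 (G (γ t) v v)) := by
  have hslope : Tendsto (slope γ t) (𝓝[≠] t) (𝓝 v) := hasDerivAt_iff_tendsto_slope.1 hγ
  have hmain : Tendsto (fun s => G (γ t) (slope γ t s) (slope γ t s)) (𝓝[≠] t)
      (𝓝 (G (γ t) v v)) :=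
    (show Continuous fun w => G (γ t) w w by fun_prop).continuousAt.tendsto.comp hslope
  have herror : (fun s => rdist (asTensor G) (γ t) (γ s) ^ 2 - G (γ t) (γ s - γ t) (γ s - γ t))
      =o[𝓝 t] fun s => (s - t) ^ 2 :=
    ((rdist_sq_sub_isLittleO hG (γ t)).comp_tendsto hγ.continuousAt).trans_isBigO
      (hγ.isBigO_sub.norm_left.pow 2)
  have hzero := (herror.mono nhdsWithin_le_nhds).tendsto_div_nhds_zero.add hmain
  rw [zero_add] at hzero
  refine hzero.congr fun s => ?_
  simp only [slope, vsub_eq_sub, map_smul, smul_apply, smul_eq_mul]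
  field_simp
  ring

end LocalComparison

section PhaseCurve

variable {E : Type*} [NormedAddCommGroup E] [NormedSpace ℝ E]

/-- The lift of a curve to the tangent bundle. It is only meaningful at points of differentiability,
that is, almost everywhere for the Lipschitz curves considered here. -/
def phaseCurve (w : ℝ → E) : ℝ → E × E := fun t => (w t, deriv w t)

variable {K : NNReal} {w : ℝ → E}

lemma exists_norm_phaseCurve_le (hw : LipschitzWith K w) (a b : ℝ) :
    ∃ C, ∀ t ∈ uIcc a b, ‖phaseCurve w t‖ ≤ C := by
  obtain ⟨C, hC⟩ := isCompact_uIcc.exists_bound_of_continuousOn hw.continuous.continuousOn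
  exact ⟨max C K, fun t ht => max_le_max (hC t ht) (norm_deriv_le_of_lipschitz hw)⟩

variable [FiniteDimensional ℝ E]

lemma stronglyMeasurable_phaseCurve (hw : LipschitzWith K w) :
    StronglyMeasurable (phaseCurve w) :=
  have := FiniteDimensional.complete ℝ E
  have := FiniteDimensional.proper_real E
  hw.continuous.stronglyMeasurable.prodMk (stronglyMeasurable_deriv w)

variable {F : Type*} [NormedAddCommGroup F]

lemma intervalIntegrable_of_bounded {f : ℝ → F} (hf : AEStronglyMeasurable f) {a b C : ℝ}
    (hC : ∀ t ∈ uIcc a b, ‖f t‖ ≤ C) : IntervalIntegrable f volume a b :=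
  intervalIntegrable_iff.2 <| Measure.integrableOn_of_bounded (M := C) (by simp) hf <|
    ae_restrict_of_forall_mem measurableSet_uIoc fun t ht => hC t (uIoc_subset_uIcc ht)

lemma intervalIntegrable_comp_phaseCurve (hw : LipschitzWith K w) {Φ : E × E → F}
    (hΦ : Continuous Φ) (a b : ℝ) :
    IntervalIntegrable (fun t => Φ (phaseCurve w t)) volume a b := by
  have := FiniteDimensional.proper_real E
  obtain ⟨C, hC⟩ := exists_norm_phaseCurve_le hw a b
  obtain ⟨M, -, hM⟩ := exists_norm_le_of_continuous hΦ C
  exact intervalIntegrable_of_bounded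
    (hΦ.comp_stronglyMeasurable (stronglyMeasurable_phaseCurve hw)).aestronglyMeasurable
    fun t ht => hM _ (hC t ht)

end PhaseCurve

section LipschitzLength

variable {n : ℕ} {G : En n → BilForm (En n)} {K : NNReal} {γ : ℝ → En n} {a b : ℝ}

lemma exists_lipschitzOnWith_rdist (hG : IsRiemannian G) (hγ : LipschitzWith K γ) (a b : ℝ) :
    ∃ L, LipschitzOnWith L (fun t => rdist (asTensor G) (γ a) (γ t)) (uIcc a b) := by
  obtain ⟨C, hC⟩ := isCompact_uIcc.exists_bound_of_continuousOn hγ.continuous.continuousOn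
  obtain ⟨M, hM, hup⟩ := exists_rdist_le_mul hG C
  refine ⟨_, LipschitzOnWith.of_le_add_mul' (M * K) fun s hs t ht => ?_⟩
  calc rdist (asTensor G) (γ a) (γ s)
      ≤ rdist (asTensor G) (γ a) (γ t) + rdist (asTensor G) (γ t) (γ s) := rdist_triangle hG _ _ _
    _ ≤ rdist (asTensor G) (γ a) (γ t) + M * K * dist s t := by
        rw [mul_assoc]
        gcongr
        refine (hup _ _ (hC t ht) (hC s hs)).trans ?_
        gcongr
        exact dist_eq_norm (γ s) (γ t) ▸ hγ.dist_le_mul s t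

lemma deriv_rdist_le (hG : IsRiemannian G) (x : En n) {v : En n} {t : ℝ}
    (hγ : HasDerivAt γ v t) :
    deriv (fun s => rdist (asTensor G) x (γ s)) t ≤ √(G (γ t) v v) := by
  by_cases hd : DifferentiableAt ℝ (fun s => rdist (asTensor G) x (γ s)) t
  swap
  · rw [deriv_zero_of_not_differentiableAt hd]
    exact Real.sqrt_nonneg _
  refine le_of_tendsto_of_tendsto
    ((hasDerivAt_iff_tendsto_slope.1 hd.hasDerivAt).mono_left (nhdsGT_le_nhdsNE t))
    ((tendsto_rdist_sq_div hG hγ).sqrt.mono_left (nhdsGT_le_nhdsNE t)) ?_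
  filter_upwards [self_mem_nhdsWithin] with s hs
  have hpos : 0 < s - t := sub_pos.2 hs
  rw [← div_pow, Real.sqrt_sq (div_nonneg (rdist_nonneg _ _ _) hpos.le), slope_def_field]
  gcongr
  linarith [rdist_triangle hG x (γ t) (γ s)]

/-- This is not immediate, as the infimum defining `rdist` runs over `C¹` curves only. -/
lemma rdist_le_clen_of_lipschitz (hG : IsRiemannian G) (hγ : LipschitzWith K γ) (hab : a ≤ b) :
    rdist (asTensor G) (γ a) (γ b) ≤ clen (asTensor G) γ a b := by
  obtain ⟨L, hL⟩ := exists_lipschitzOnWith_rdist hG hγ a b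
  have hac := hL.absolutelyContinuousOnInterval
  have hspeed : IntervalIntegrable (fun t => √(G (γ t) (deriv γ t) (deriv γ t))) volume a b :=
    intervalIntegrable_comp_phaseCurve (Φ := fun p => √(G p.1 p.2 p.2)) hγ
      (hG.continuous_apply_self continuous_fst continuous_snd).sqrt a b
  calc rdist (asTensor G) (γ a) (γ b)
      = ∫ t in a..b, deriv (fun t => rdist (asTensor G) (γ a) (γ t)) t := by
        rw [hac.integral_deriv_eq_sub, rdist_self, sub_zero]
    _ ≤ clen (asTensor G) γ a b := by
        refine intervalIntegral.integral_mono_ae hab hac.intervalIntegrable_deriv hspeed ?_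
        filter_upwards [hγ.ae_differentiableAt_real] with t ht
        exact deriv_rdist_le hG _ ht.hasDerivAt

/-- `√q ≤ (1 + q) / 2` bounds the length by the energy. -/
lemma sub_le_cenergy (hG : IsRiemannian G) (hγ : LipschitzWith K γ) (hab : a ≤ b)
    (h : rdist (asTensor G) (γ a) (γ b) = b - a) : b - a ≤ cenergy (asTensor G) γ a b := by
  have hcont : Continuous fun p : En n × En n => G p.1 p.2 p.2 :=
    hG.continuous_apply_self continuous_fst continuous_snd
  have hint : IntervalIntegrable (fun t => G (γ t) (deriv γ t) (deriv γ t)) volume a b :=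
    intervalIntegrable_comp_phaseCurve hγ hcont a b
  have hlen : b - a ≤ ((b - a) + cenergy (asTensor G) γ a b) / 2 := calc
    b - a ≤ clen (asTensor G) γ a b := h ▸ rdist_le_clen_of_lipschitz hG hγ hab
    _ ≤ ∫ t in a..b, (1 + G (γ t) (deriv γ t) (deriv γ t)) / 2 := by
      refine intervalIntegral.integral_mono_on hab
        (intervalIntegrable_comp_phaseCurve hγ hcont.sqrt a b)
        ((intervalIntegrable_const.add hint).div_const 2) fun t _ => ?_
      have := sq_nonneg (√(G (γ t) (deriv γ t) (deriv γ t)) - 1)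
      have := Real.sq_sqrt (hG.nonneg (γ t) (deriv γ t))
      linarith
    _ = ((b - a) + cenergy (asTensor G) γ a b) / 2 := by
      rw [intervalIntegral.integral_div,
        intervalIntegral.integral_add intervalIntegrable_const hint]
      simp [cenergy, asTensor]
  linarith

end LipschitzLength

section GeodesicForce

variable {E : Type*} [NormedAddCommGroup E] [NormedSpace ℝ E]

/-- The force `y ↦ ½ ∂_y G(v, v)` at `x`, the right-hand side of the geodesic equation in momentum
form. -/
def geodesicForce (G : E → BilForm E) (x v : E) : E →L[ℝ] ℝ :=
  (1 / 2 : ℝ) • ((fderiv ℝ G x).flip v).flip v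

lemma geodesicForce_apply (G : E → BilForm E) (x v y : E) :
    geodesicForce G x v y = 1 / 2 * fderiv ℝ G x y v v := rfl

lemma continuous_geodesicForce [FiniteDimensional ℝ E] {G : E → BilForm E} (hG : ContDiff ℝ 1 G) :
    Continuous fun p : E × E => geodesicForce G p.1 p.2 := by
  have hfderiv : Continuous fun p : E × E => fderiv ℝ G p.1 :=
    (hG.continuous_fderiv one_ne_zero).comp continuous_fst
  refine continuous_clm_apply.2 fun y => ?_
  exact continuous_const.mul
    (((hfderiv.clm_apply continuous_const).clm_apply continuous_snd).clm_apply continuous_snd)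

end GeodesicForce

section FirstVariation

lemma hasDerivAt_integral_comp_add_smul {F : Type*} [NormedAddCommGroup F] [NormedSpace ℝ F]
    [FiniteDimensional ℝ F] {L : F → ℝ} (hL : ContDiff ℝ 1 L) {c d : ℝ → F}
    (hc : StronglyMeasurable c) (hd : StronglyMeasurable d) {a b C D : ℝ}
    (hC : ∀ t ∈ uIcc a b, ‖c t‖ ≤ C) (hD : ∀ t ∈ uIcc a b, ‖d t‖ ≤ D) :
    HasDerivAt (fun s : ℝ => ∫ t in a..b, L (c t + s • d t))
      (∫ t in a..b, fderiv ℝ L (c t) (d t)) 0 := by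
  have := FiniteDimensional.proper_real F
  have hfderiv : Continuous (fderiv ℝ L) := hL.continuous_fderiv one_ne_zero
  obtain ⟨M, hM, hLM⟩ := exists_norm_le_of_continuous hfderiv (C + D)
  have hmeas : ∀ s : ℝ, StronglyMeasurable fun t => c t + s • d t := fun s =>
    hc.add (hd.const_smul s)
  have hbound : ∀ s ∈ Metric.ball (0 : ℝ) 1, ∀ t ∈ uIcc a b, ‖c t + s • d t‖ ≤ C + D := by
    intro s hs t ht
    refine (norm_add_le _ _).trans (add_le_add (hC t ht) ?_)
    rw [norm_smul]
    exact (mul_le_of_le_one_left (norm_nonneg _) (mem_ball_zero_iff.1 hs).le).trans (hD t ht)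
  have hderiv : ∀ s t, HasDerivAt (fun s : ℝ => L (c t + s • d t))
      (fderiv ℝ L (c t + s • d t) (d t)) s := fun s t =>
    (hL.differentiable one_ne_zero _).hasFDerivAt.comp_hasDerivAt s
      (by simpa using ((hasDerivAt_id s).smul_const (d t)).const_add (c t))
  obtain ⟨M₀, -, hM₀⟩ := exists_norm_le_of_continuous hL.continuous C
  have h := (intervalIntegral.hasDerivAt_integral_of_dominated_loc_of_deriv_le
    (μ := volume) (a := a) (b := b) (F := fun s t => L (c t + s • d t)) (bound := fun _ => M * D)
    (Metric.ball_mem_nhds (0 : ℝ) one_pos)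
    (Eventually.of_forall fun s =>
      (hL.continuous.comp_stronglyMeasurable (hmeas s)).aestronglyMeasurable)
    (intervalIntegrable_of_bounded
      (hL.continuous.comp_stronglyMeasurable (hmeas 0)).aestronglyMeasurable
      fun t ht => by simpa using hM₀ _ (hC t ht))
    ((hfderiv.comp continuous_fst).clm_apply continuous_snd |>.comp_stronglyMeasurable
      ((hmeas 0).prodMk hd)).aestronglyMeasurable
    (ae_of_all _ fun t ht s hs => ?_) intervalIntegrable_const
    (ae_of_all _ fun t _ s _ => hderiv s t)).2
  · simpa using h
  · have ht' := uIoc_subset_uIcc ht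
    exact (ContinuousLinearMap.le_opNorm _ _).trans
      (mul_le_mul (hLM _ (hbound s hs t ht')) (hD t ht') (norm_nonneg _) hM)

variable {n : ℕ} {G : En n → BilForm (En n)} {K K' : NNReal} {γ z : ℝ → En n} {a b : ℝ}

lemma fderiv_kinetic (hG : ContDiff ℝ 1 G) (hsymm : ∀ x v w, G x v w = G x w v)
    (p q : En n × En n) :
    fderiv ℝ (fun p : En n × En n => G p.1 p.2 p.2) p q =
      2 * (geodesicForce G p.1 p.2 q.1 + G p.1 p.2 q.2) := by
  have hfst : HasFDerivAt (fun p : En n × En n => G p.1)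
      ((fderiv ℝ G p.1).comp (.fst ℝ (En n) (En n))) p :=
    (hG.differentiable one_ne_zero p.1).hasFDerivAt.comp p hasFDerivAt_fst
  rw [((hfst.clm_apply hasFDerivAt_snd).clm_apply hasFDerivAt_snd).fderiv]
  simp [geodesicForce_apply, hsymm p.1 q.2]
  ring

lemma hasDerivAt_cenergy (hG : ContDiff ℝ 1 G) (hsymm : ∀ x v w, G x v w = G x w v)
    (hγ : LipschitzWith K γ) (hz : LipschitzWith K' z) (a b : ℝ) :
    HasDerivAt (fun s : ℝ => cenergy (asTensor G) (fun t => γ t + s • z t) a b)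
      (2 * ∫ t in a..b,
        (geodesicForce G (γ t) (deriv γ t) (z t) + G (γ t) (deriv γ t) (deriv z t))) 0 := by
  obtain ⟨C, hC⟩ := exists_norm_phaseCurve_le hγ a b
  obtain ⟨D, hD⟩ := exists_norm_phaseCurve_le hz a b
  have hL : ContDiff ℝ 1 fun p : En n × En n => G p.1 p.2 p.2 :=
    ((hG.comp contDiff_fst).clm_apply contDiff_snd).clm_apply contDiff_snd
  have h := hasDerivAt_integral_comp_add_smul hL (stronglyMeasurable_phaseCurve hγ)
    (stronglyMeasurable_phaseCurve hz) hC hD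
  simp only [fderiv_kinetic hG hsymm, intervalIntegral.integral_const_mul] at h
  refine h.congr_of_eventuallyEq (Eventually.of_forall fun s => ?_)
  refine intervalIntegral.integral_congr_ae ?_
  filter_upwards [hγ.ae_differentiableAt_real, hz.ae_differentiableAt_real] with t hγt hzt _
  simp [phaseCurve, asTensor, (hγt.hasDerivAt.fun_add (hzt.hasDerivAt.fun_const_smul s)).deriv]

end FirstVariation

section WeakEulerLagrange

variable {n : ℕ} {G : En n → BilForm (En n)} {K K' : NNReal} {γ z : ℝ → En n} {a b : ℝ}

lemma bilForm_deriv_self_eq_one (hG : IsRiemannian G) {t : ℝ} {v : En n} (hγ : HasDerivAt γ v t)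
    (hiso : ∀ᶠ s in 𝓝 t, rdist (asTensor G) (γ t) (γ s) = |t - s|) : G (γ t) v v = 1 := by
  refine tendsto_nhds_unique (tendsto_rdist_sq_div hG hγ) (tendsto_const_nhds.congr' ?_)
  filter_upwards [nhdsWithin_le_nhds hiso, self_mem_nhdsWithin] with s hs hne
  have : s - t ≠ 0 := sub_ne_zero.2 hne
  rw [hs, sq_abs, sub_sq_comm, div_self (by positivity)]

lemma cenergy_of_isometry (hG : IsRiemannian G) (hγ : LipschitzWith K γ) (hab : a ≤ b)
    (hiso : ∀ s ∈ Icc a b, ∀ u ∈ Icc a b, rdist (asTensor G) (γ s) (γ u) = |s - u|) :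
    cenergy (asTensor G) γ a b = b - a := by
  have hspeed : ∀ᵐ t, t ∈ Ioo a b → G (γ t) (deriv γ t) (deriv γ t) = 1 := by
    filter_upwards [hγ.ae_differentiableAt_real] with t ht htab
    exact bilForm_deriv_self_eq_one hG ht.hasDerivAt <| eventually_of_mem
      (Icc_mem_nhds htab.1 htab.2) (hiso t (Ioo_subset_Icc_self htab))
  rw [cenergy, intervalIntegral.integral_of_le hab, integral_Ioc_eq_integral_Ioo,
    setIntegral_congr_ae (g := fun _ => 1) measurableSet_Ioo hspeed]
  simp [hab]

/-- A local isometry minimises the energy among the Lipschitz curves with the same endpoints. -/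
lemma integral_geodesicForce_add_eq_zero (hG : IsRiemannian G) (hG1 : ContDiff ℝ 1 G)
    (hγ : LipschitzWith K γ) (hab : a ≤ b)
    (hiso : ∀ s ∈ Icc a b, ∀ u ∈ Icc a b, rdist (asTensor G) (γ s) (γ u) = |s - u|)
    (hz : LipschitzWith K' z) (hza : z a = 0) (hzb : z b = 0) :
    ∫ t in a..b,
      (geodesicForce G (γ t) (deriv γ t) (z t) + G (γ t) (deriv γ t) (deriv z t)) = 0 := by
  have hmin : ∀ s : ℝ, b - a ≤ cenergy (asTensor G) (fun t => γ t + s • z t) a b := by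
    intro s
    refine sub_le_cenergy hG (hγ.add ((lipschitzWith_smul s).comp hz)) hab ?_
    simp [hza, hzb, hiso a (left_mem_Icc.2 hab) b (right_mem_Icc.2 hab), abs_sub_comm a b,
      abs_of_nonneg (sub_nonneg.2 hab)]
  have hlocal : IsLocalMin
      (fun s : ℝ => cenergy (asTensor G) (fun t => γ t + s • z t) a b) 0 := by
    refine Eventually.of_forall fun s => ?_
    simpa [cenergy_of_isometry hG hγ hab hiso] using hmin s
  have := hlocal.hasDerivAt_eq_zero (hasDerivAt_cenergy hG1 hG.symm hγ hz a b)
  linarith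

end WeakEulerLagrange

section Primitive

variable {F : Type*} [NormedAddCommGroup F] [NormedSpace ℝ F] {f h : ℝ → F} {a b : ℝ}

lemma lipschitzWith_integral_of_bounded (hf : StronglyMeasurable f) {C : NNReal}
    (hC : ∀ t, ‖f t‖ ≤ C) (a : ℝ) : LipschitzWith C (fun t => ∫ s in a..t, f s) := by
  have hint : ∀ t, IntervalIntegrable f volume a t := fun t =>
    intervalIntegrable_of_bounded hf.aestronglyMeasurable fun s _ => hC s
  refine LipschitzWith.of_dist_le_mul fun x y => ?_
  rw [dist_eq_norm, intervalIntegral.integral_interval_sub_left (hint x) (hint y), Real.dist_eq]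
  exact intervalIntegral.norm_integral_le_of_norm_le_const fun s _ => hC s

lemma absolutelyContinuousOnInterval_integral (hf : IntervalIntegrable f volume a b) :
    AbsolutelyContinuousOnInterval (fun t => ∫ s in a..t, f s) a b := by
  refine squeeze_zero' (Eventually.of_forall fun E => by positivity) ?_
    (hf.norm.absolutelyContinuousOnInterval_intervalIntegral left_mem_uIcc)
  filter_upwards [mem_inf_of_right (mem_principal_self _)] with E hE
  refine Finset.sum_le_sum fun i hi => ?_
  obtain ⟨hl, hr⟩ := hE.1 i hi
  have hsub : ∀ t ∈ uIcc a b, IntervalIntegrable f volume a t := fun t ht =>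
    hf.mono_set (uIcc_subset_uIcc_left ht)
  rw [dist_eq_norm, Real.dist_eq,
    intervalIntegral.integral_interval_sub_left (hsub _ hl) (hsub _ hr),
    intervalIntegral.integral_interval_sub_left (hsub _ hl).norm (hsub _ hr).norm]
  exact intervalIntegral.norm_integral_le_abs_integral_norm

variable [CompleteSpace F]

lemma integral_eq_sub_of_ae_hasDerivAt (hf : IntervalIntegrable f volume a b)
    (hh : AbsolutelyContinuousOnInterval h a b)
    (hderiv : ∀ᵐ t, t ∈ uIcc a b → HasDerivAt h (f t) t) :
    ∫ t in a..b, f t = h b - h a := by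
  obtain ⟨c, hc⟩ :=
    (hh.sub (absolutelyContinuousOnInterval_integral hf)).const_of_ae_hasDerivAt_zero (by
      filter_upwards [hderiv, hf.ae_hasDerivAt_integral] with t ht hprim hmem
      simpa using (ht hmem).sub (hprim hmem a left_mem_uIcc))
  have ha := hc a left_mem_uIcc
  have hb := hc b right_mem_uIcc
  simp only [Pi.sub_apply, intervalIntegral.integral_same, sub_zero] at ha hb
  rw [ha, ← hb, sub_sub_cancel]

lemma integral_deriv_eq_sub_of_lipschitz [FiniteDimensional ℝ F] {K : NNReal}
    (hh : LipschitzWith K h) (a b : ℝ) : ∫ t in a..b, deriv h t = h b - h a :=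
  integral_eq_sub_of_ae_hasDerivAt
    (intervalIntegrable_of_bounded (aestronglyMeasurable_deriv h volume)
      fun _ _ => norm_deriv_le_of_lipschitz hh)
    hh.lipschitzOnWith.absolutelyContinuousOnInterval
    (hh.ae_differentiableAt_real.mono fun _ ht _ => ht.hasDerivAt)

lemma hasDerivAt_of_eq_const_add_integral {g : ℝ → F} (hg : Continuous g) {c : F}
    (hh : ∀ t ∈ Icc a b, h t = c + ∫ s in a..t, f s) (hfg : ∀ᵐ t, t ∈ Ioc a b → f t = g t)
    {t : ℝ} (ht : t ∈ Ioo a b) : HasDerivAt h (g t) t := by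
  refine ((hg.integral_hasStrictDerivAt a t).hasDerivAt.const_add c).congr_of_eventuallyEq ?_
  filter_upwards [Icc_mem_nhds ht.1 ht.2] with s hs
  rw [hh s hs, intervalIntegral.integral_congr_ae]
  filter_upwards [hfg] with u hu hus
  rw [uIoc_of_le hs.1] at hus
  exact hu ⟨hus.1, hus.2.trans hs.2⟩

lemma integral_primitive_smul_add_smul_primitive {χ : ℝ → ℝ}
    (hχ : IntervalIntegrable χ volume a b) (hχ0 : ∫ t in a..b, χ t = 0)
    (hf : IntervalIntegrable f volume a b) :
    ∫ t in a..b, ((∫ s in a..t, χ s) • f t + χ t • ∫ s in a..t, f s) = 0 := by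
  have hφ := absolutelyContinuousOnInterval_integral hχ
  have hP := absolutelyContinuousOnInterval_integral hf
  rw [integral_eq_sub_of_ae_hasDerivAt (h := fun t => (∫ s in a..t, χ s) • ∫ s in a..t, f s)
    ((hf.continuousOn_smul hφ.continuousOn).add (hχ.smul_continuousOn hP.continuousOn))
    (hφ.fun_smul hP)]
  · simp [hχ0]
  · filter_upwards [hχ.ae_hasDerivAt_integral, hf.ae_hasDerivAt_integral] with t htχ htf ht
    exact (htχ ht a left_mem_uIcc).smul (htf ht a left_mem_uIcc)

end Primitive

section DuBoisReymond

variable {F : Type*} [NormedAddCommGroup F] [NormedSpace ℝ F] [CompleteSpace F]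

lemma ae_eq_average_of_integral_smul_eq_zero {Ω : Type*} [MeasurableSpace Ω] {μ : Measure Ω}
    [IsFiniteMeasure μ] {q : Ω → F} (hq : Integrable q μ)
    (h : ∀ χ : Ω → ℝ, StronglyMeasurable χ → (∀ t, |χ t| ≤ 1) → ∫ t, χ t ∂μ = 0 →
      ∫ t, χ t • q t ∂μ = 0) :
    q =ᵐ[μ] fun _ => ⨍ t, q t ∂μ := by
  rcases eq_zero_or_neZero μ with rfl | hμ
  · simp [EventuallyEq]
  have hint : Integrable (fun t => q t - ⨍ t, q t ∂μ) μ := hq.sub (integrable_const _)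
  suffices (fun t => q t - ⨍ t, q t ∂μ) =ᵐ[μ] 0 by
    filter_upwards [this] with t ht using sub_eq_zero.1 ht
  refine hint.ae_eq_zero_of_forall_setIntegral_eq_zero fun s hs _ => ?_
  set θ := (μ.real univ)⁻¹ * μ.real s with hθ
  have hθ0 : 0 ≤ θ := by positivity
  have hθ1 : θ ≤ 1 := inv_mul_le_one_of_le₀ (measureReal_mono (subset_univ s)) measureReal_nonneg
  have hχ1 : ∀ t, |s.indicator 1 t - θ| ≤ 1 := fun t => by
    by_cases ht : t ∈ s <;> simp only [ht, indicator_of_mem, indicator_of_notMem,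
      not_false_eq_true, Pi.one_apply, abs_le] <;> constructor <;> linarith
  have hχ0 : ∫ t, (s.indicator 1 t - θ) ∂μ = 0 := by
    rw [integral_sub ((integrable_const 1).indicator hs) (integrable_const _),
      integral_indicator_one hs, integral_const, smul_eq_mul, hθ,
      mul_inv_cancel_left₀ measureReal_univ_ne_zero, sub_self]
  have hχq : ∫ t, (s.indicator 1 t - θ) • q t ∂μ = 0 :=
    h _ ((stronglyMeasurable_const.indicator hs).sub stronglyMeasurable_const) hχ1 hχ0
  simp only [sub_smul, ← indicator_smul_apply_left, Pi.one_apply, one_smul] at hχq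
  rwa [integral_sub (hq.indicator hs) (hq.fun_smul θ), integral_indicator hs, integral_smul, hθ,
    mul_comm, mul_smul, ← average_eq, ← setIntegral_const,
    ← integral_sub hq.integrableOn (integrable_const _).integrableOn] at hχq

/-- The lemma of du Bois-Reymond: the primitives of bounded functions of mean zero are enough to
test the Euler–Lagrange equation `p' = f`. -/
lemma exists_ae_eq_const_add_integral {f p : ℝ → F} {a b : ℝ} (hab : a ≤ b)
    (hf : IntervalIntegrable f volume a b) (hp : IntervalIntegrable p volume a b)
    (h : ∀ χ : ℝ → ℝ, StronglyMeasurable χ → (∀ t, |χ t| ≤ 1) → ∫ t in a..b, χ t = 0 →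
      ∫ t in a..b, ((∫ s in a..t, χ s) • f t + χ t • p t) = 0) :
    ∃ c, ∀ᵐ t, t ∈ Ioc a b → p t = c + ∫ s in a..t, f s := by
  have hP : IntervalIntegrable (fun t => ∫ s in a..t, f s) volume a b :=
    (absolutelyContinuousOnInterval_integral hf).continuousOn.intervalIntegrable
  have hq := ae_eq_average_of_integral_smul_eq_zero (hp.sub hP).1 fun χ hχ hχ1 hχ0 => ?_
  · exact ⟨_, (ae_restrict_iff' measurableSet_Ioc).1 (hq.mono fun t ht => eq_add_of_sub_eq ht)⟩
  rw [← intervalIntegral.integral_of_le hab] at hχ0 ⊢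
  have hχi : IntervalIntegrable χ volume a b :=
    intervalIntegrable_of_bounded hχ.aestronglyMeasurable fun t _ => hχ1 t
  have hφ := (absolutelyContinuousOnInterval_integral hχi).continuousOn
  have hχsmul : ∀ {r : ℝ → F}, IntervalIntegrable r volume a b →
      IntervalIntegrable (fun t => χ t • r t) volume a b := fun hr =>
    ⟨hr.1.bdd_smul 1 hχ.aestronglyMeasurable (Eventually.of_forall hχ1),
      hr.2.bdd_smul 1 hχ.aestronglyMeasurable (Eventually.of_forall hχ1)⟩
  have hsub := congrArg₂ (· - ·) (h χ hχ hχ1 hχ0)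
    (integral_primitive_smul_add_smul_primitive hχi hχ0 hf)
  rw [← intervalIntegral.integral_sub ((hf.continuousOn_smul hφ).add (hχsmul hp))
    ((hf.continuousOn_smul hφ).add (hχsmul hP))] at hsub
  simpa only [add_sub_add_left_eq_sub, ← smul_sub, sub_zero] using hsub

end DuBoisReymond

section Regularity

lemma isInvertible_of_pos {E : Type*} [NormedAddCommGroup E] [InnerProductSpace ℝ E]
    [FiniteDimensional ℝ E] {B : BilForm E} (hB : ∀ v, v ≠ 0 → 0 < B v v) : B.IsInvertible := by
  have := FiniteDimensional.complete ℝ E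
  have hinj : Function.Injective (B : E →ₗ[ℝ] (E →L[ℝ] ℝ)) := by
    refine (injective_iff_map_eq_zero _).2 fun v hv => by_contra fun hne => (hB v hne).ne' ?_
    exact DFunLike.congr_fun hv v
  have hrank : Module.finrank ℝ E = Module.finrank ℝ (E →L[ℝ] ℝ) :=
    (InnerProductSpace.toDual ℝ E).toLinearEquiv.finrank_eq
  exact ⟨(LinearEquiv.ofInjectiveOfFinrankEq _ hinj hrank).toContinuousLinearEquiv, rfl⟩

variable {n : ℕ} {G : En n → BilForm (En n)} {K : NNReal} {γ : ℝ → En n} {a b : ℝ}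

lemma IsRiemannian.isInvertible (hG : IsRiemannian G) (x : En n) : (G x).IsInvertible :=
  isInvertible_of_pos (hG.pos x)

lemma IsRiemannian.continuous_inverse (hG : IsRiemannian G) : Continuous fun x => (G x).inverse :=
  continuous_iff_continuousAt.2 fun x =>
    ((hG.isInvertible x).contDiffAt_map_inverse (𝕜 := ℝ) (n := 0)).continuousAt.comp
      hG.continuous.continuousAt

lemma exists_ae_bilForm_deriv_eq_const_add_integral (hG : IsRiemannian G) (hG1 : ContDiff ℝ 1 G)
    (hγ : LipschitzWith K γ) (hab : a ≤ b)
    (hiso : ∀ s ∈ Icc a b, ∀ u ∈ Icc a b, rdist (asTensor G) (γ s) (γ u) = |s - u|) :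
    ∃ c, ∀ᵐ t, t ∈ Ioc a b →
      G (γ t) (deriv γ t) = c + ∫ s in a..t, geodesicForce G (γ s) (deriv γ s) := by
  have hforce := intervalIntegrable_comp_phaseCurve hγ (continuous_geodesicForce hG1) a b
  have hmom := intervalIntegrable_comp_phaseCurve hγ (Φ := fun p : En n × En n => G p.1 p.2)
    ((hG.continuous.comp continuous_fst).clm_apply continuous_snd) a b
  refine exists_ae_eq_const_add_integral hab hforce hmom fun χ hχ hχ1 hχ0 => ?_
  have hχi : ∀ c d, IntervalIntegrable χ volume c d := fun c d =>
    intervalIntegrable_of_bounded hχ.aestronglyMeasurable fun t _ => hχ1 t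
  have hφ : LipschitzWith 1 fun t => ∫ s in a..t, χ s :=
    lipschitzWith_integral_of_bounded hχ (C := 1) hχ1 a
  have hint : IntervalIntegrable (fun t => (∫ s in a..t, χ s) • geodesicForce G (γ t) (deriv γ t)
      + χ t • G (γ t) (deriv γ t)) volume a b :=
    (hforce.continuousOn_smul hφ.continuous.continuousOn).add
      ⟨hmom.1.bdd_smul 1 hχ.aestronglyMeasurable (Eventually.of_forall hχ1),
        hmom.2.bdd_smul 1 hχ.aestronglyMeasurable (Eventually.of_forall hχ1)⟩
  ext y
  have hz : LipschitzWith _ fun t => (∫ s in a..t, χ s) • y :=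
    (ContinuousLinearMap.toSpanSingleton ℝ y).lipschitz.comp hφ
  rw [ContinuousLinearMap.intervalIntegral_apply hint, zero_apply,
    ← integral_geodesicForce_add_eq_zero hG hG1 hγ hab hiso hz (by simp) (by simp [hχ0])]
  refine intervalIntegral.integral_congr_ae ?_
  filter_upwards [(hχi a b).ae_hasDerivAt_integral] with t ht htab
  have hderiv := ((ht (uIoc_subset_uIcc htab) a left_mem_uIcc).smul_const y).deriv
  simp [hderiv]

lemma hasDerivAt_of_lipschitz_of_isometry (hG : IsRiemannian G) (hG1 : ContDiff ℝ 1 G)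
    (hγ : LipschitzWith K γ)
    (hiso : ∀ s ∈ Icc a b, ∀ u ∈ Icc a b, rdist (asTensor G) (γ s) (γ u) = |s - u|)
    {t : ℝ} (ht : t ∈ Ioo a b) :
    HasDerivAt γ (deriv γ t) t ∧
      HasDerivAt (fun s => G (γ s) (deriv γ s)) (geodesicForce G (γ t) (deriv γ t)) t := by
  have hab : a ≤ b := (ht.1.trans ht.2).le
  obtain ⟨c, hc⟩ := exists_ae_bilForm_deriv_eq_const_add_integral hG hG1 hγ hab hiso
  set m : ℝ → En n →L[ℝ] ℝ := fun t => c + ∫ s in a..t, geodesicForce G (γ s) (deriv γ s) with hm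
  set v : ℝ → En n := fun t => (G (γ t)).inverse (m t) with hv
  have hvcont : Continuous v := (hG.continuous_inverse.comp hγ.continuous).clm_apply <|
    continuous_const.add <| intervalIntegral.continuous_primitive
      (fun x y => intervalIntegrable_comp_phaseCurve hγ (continuous_geodesicForce hG1) x y) a
  have hderiv : ∀ᵐ s, s ∈ Ioc a b → deriv γ s = v s := hc.mono fun s hs hmem => by
    rw [hv, hm]; simp only; rw [← hs hmem, (hG.isInvertible _).inverse_apply_self]
  have hγv : ∀ s ∈ Ioo a b, HasDerivAt γ (v s) s := fun s hs =>
    hasDerivAt_of_eq_const_add_integral hvcont (c := γ a)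
      (fun u _ => by rw [integral_deriv_eq_sub_of_lipschitz hγ, add_sub_cancel]) hderiv hs
  have hforce : Continuous fun s => geodesicForce G (γ s) (v s) :=
    (continuous_geodesicForce hG1).comp₂ hγ.continuous hvcont
  have hforce_eq : ∀ᵐ s, s ∈ Ioc a b →
      geodesicForce G (γ s) (deriv γ s) = geodesicForce G (γ s) (v s) :=
    hderiv.mono fun s hs hmem => congrArg _ (hs hmem)
  have hmderiv : HasDerivAt m (geodesicForce G (γ t) (v t)) t :=
    hasDerivAt_of_eq_const_add_integral hforce (fun _ _ => rfl) hforce_eq ht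
  rw [(hγv t ht).deriv]
  refine ⟨hγv t ht, hmderiv.congr_of_eventuallyEq ?_⟩
  filter_upwards [isOpen_Ioo.mem_nhds ht] with s hs
  rw [(hγv s hs).deriv, hv, (hG.isInvertible _).self_apply_inverse]

end Regularity

section Geodesic

variable {n : ℕ} {G : En n → BilForm (En n)} {γ : ℝ → En n} {a b : ℝ}

lemma tendsto_of_tendsto_rdist (hG : IsRiemannian G) {ι : Type*} {l : Filter ι} {x : En n}
    {y : ι → En n} (h : Tendsto (fun i => rdist (asTensor G) x (y i)) l (𝓝 0)) :
    Tendsto y l (𝓝 x) := by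
  obtain ⟨c, hc, hle⟩ := exists_mul_min_le_rdist hG ‖x‖
  have hmin : ∀ i, min ‖y i - x‖ 1 ≤ rdist (asTensor G) x (y i) / c := fun i =>
    (le_div_iff₀' hc).2 (hle x (y i) le_rfl)
  have hlim : Tendsto (fun i => rdist (asTensor G) x (y i) / c) l (𝓝 0) := by
    simpa using h.div_const c
  rw [tendsto_iff_norm_sub_tendsto_zero]
  refine squeeze_zero' (Eventually.of_forall fun _ => norm_nonneg _) ?_ hlim
  filter_upwards [hlim.eventually (gt_mem_nhds one_pos)] with i hi
  exact (min_le_iff.1 (hmin i)).resolve_right hi.not_ge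

lemma continuousWithinAt_of_isometry (hG : IsRiemannian G) {S : Set ℝ} {s : ℝ}
    (h : ∀ᶠ u in 𝓝[S] s, rdist (asTensor G) (γ s) (γ u) = |s - u|) : ContinuousWithinAt γ S s := by
  have hlim : Tendsto (fun u => |s - u|) (𝓝 s) (𝓝 0) :=
    ((continuous_const.sub continuous_id).abs.tendsto' s 0 (by simp))
  exact tendsto_of_tendsto_rdist hG
    ((hlim.mono_left nhdsWithin_le_nhds).congr' (h.mono fun _ hu => hu.symm))

lemma exists_lipschitzOnWith_of_isometry (hG : IsRiemannian G)
    (hiso : ∀ s ∈ Icc a b, ∀ u ∈ Icc a b, rdist (asTensor G) (γ s) (γ u) = |s - u|) :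
    ∃ K, LipschitzOnWith K γ (Icc a b) := by
  have hcont : ContinuousOn γ (Icc a b) := fun s hs =>
    continuousWithinAt_of_isometry hG (eventually_mem_nhdsWithin.mono (hiso s hs))
  obtain ⟨R, hR⟩ := isCompact_Icc.exists_bound_of_continuousOn hcont
  obtain ⟨c, hc, hle⟩ := exists_mul_min_le_rdist hG R
  refine ⟨Real.toNNReal (max (2 * R) 1 / c), LipschitzOnWith.of_dist_le' fun s hs u hu => ?_⟩
  have hdiam : ‖γ u - γ s‖ ≤ max (2 * R) 1 :=
    ((norm_sub_le _ _).trans (by linarith [hR s hs, hR u hu])).trans (le_max_left _ _)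
  have hmin : ‖γ u - γ s‖ ≤ max (2 * R) 1 * min ‖γ u - γ s‖ 1 := by
    rcases min_cases ‖γ u - γ s‖ 1 with ⟨h, -⟩ | ⟨h, -⟩ <;> rw [h]
    · exact le_mul_of_one_le_left (norm_nonneg _) (le_max_right _ _)
    · rwa [mul_one]
  calc dist (γ s) (γ u) = ‖γ u - γ s‖ := by rw [dist_comm, dist_eq_norm]
    _ ≤ max (2 * R) 1 * min ‖γ u - γ s‖ 1 := hmin
    _ ≤ max (2 * R) 1 * (|s - u| / c) := by
        gcongr
        exact (le_div_iff₀' hc).2 (hiso s hs u hu ▸ hle _ _ (hR s hs))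
    _ = max (2 * R) 1 / c * dist s u := by rw [Real.dist_eq]; ring

lemma hasDerivAt_of_isometry (hG : IsRiemannian G) (hG1 : ContDiff ℝ 1 G)
    (hiso : ∀ s ∈ Icc a b, ∀ u ∈ Icc a b, rdist (asTensor G) (γ s) (γ u) = |s - u|)
    {t : ℝ} (ht : t ∈ Ioo a b) :
    HasDerivAt γ (deriv γ t) t ∧
      HasDerivAt (fun s => G (γ s) (deriv γ s)) (geodesicForce G (γ t) (deriv γ t)) t := by
  have hab : a ≤ b := (ht.1.trans ht.2).le
  obtain ⟨K, hK⟩ := exists_lipschitzOnWith_of_isometry hG hiso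
  set w : ℝ → En n := IccExtend hab ((Icc a b).domRestrict γ)
  have hwK : LipschitzWith (K * 1) w :=
    (lipschitzOnWith_iff_restrict.1 hK).comp (LipschitzWith.projIcc hab)
  have hwγ : EqOn w γ (Icc a b) := fun s hs => IccExtend_of_mem hab _ hs
  have hwγ' : ∀ s ∈ Ioo a b, w =ᶠ[𝓝 s] γ := fun s hs =>
    hwγ.eventuallyEq_of_mem (Icc_mem_nhds hs.1 hs.2)
  obtain ⟨hderiv, hmom⟩ := hasDerivAt_of_lipschitz_of_isometry hG hG1 hwK
    (fun s hs u hu => by rw [hwγ hs, hwγ hu, hiso s hs u hu]) ht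
  rw [(hwγ' t ht).deriv_eq, hwγ (Ioo_subset_Icc_self ht)] at hmom
  refine ⟨((hwγ' t ht).hasDerivAt_iff.1 hderiv).differentiableAt.hasDerivAt,
    hmom.congr_of_eventuallyEq ?_⟩
  filter_upwards [isOpen_Ioo.mem_nhds ht] with s hs
  rw [(hwγ' s hs).deriv_eq, hwγ (Ioo_subset_Icc_self hs)]

namespace IsGeodesicOn

variable {I : Set ℝ}

lemma eventually_rdist_eq (hγ : IsGeodesicOn (rdist (asTensor G)) γ 1 I) {t : ℝ} (ht : t ∈ I) :
    ∀ᶠ s in 𝓝[I] t, rdist (asTensor G) (γ t) (γ s) = |t - s| := by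
  obtain ⟨δ, hδ, h⟩ := hγ t ht
  filter_upwards [self_mem_nhdsWithin, nhdsWithin_le_nhds (Metric.ball_mem_nhds t hδ)] with s hs hst
  simpa using h t ht s hs (by simpa) hst

lemma continuousOn (hG : IsRiemannian G) (hγ : IsGeodesicOn (rdist (asTensor G)) γ 1 I) :
    ContinuousOn γ I := fun _ ht => continuousWithinAt_of_isometry hG (hγ.eventually_rdist_eq ht)

lemma hasDerivAt (hG : IsRiemannian G) (hG1 : ContDiff ℝ 1 G)
    (hγ : IsGeodesicOn (rdist (asTensor G)) γ 1 I) {t : ℝ} (ht : I ∈ 𝓝 t) :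
    HasDerivAt γ (deriv γ t) t ∧
      HasDerivAt (fun s => G (γ s) (deriv γ s)) (geodesicForce G (γ t) (deriv γ t)) t := by
  obtain ⟨δ, hδ, h⟩ := hγ t (mem_of_mem_nhds ht)
  obtain ⟨η, hη, hI⟩ := Metric.mem_nhds_iff.1 (inter_mem ht (Metric.ball_mem_nhds t hδ))
  have hmem : ∀ s ∈ Icc (t - η / 2) (t + η / 2), s ∈ I ∧ |s - t| < δ := fun s hs =>
    hI <| by rw [Metric.mem_ball, Real.dist_eq, abs_lt]; constructor <;> linarith [hs.1, hs.2]
  refine hasDerivAt_of_isometry hG hG1 (a := t - η / 2) (b := t + η / 2) (fun s hs u hu => ?_)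
    ⟨by linarith, by linarith⟩
  simpa using h s (hmem s hs).1 u (hmem u hu).1 (hmem s hs).2 (hmem u hu).2

lemma bilForm_deriv_self_eq_one (hG : IsRiemannian G) (hG1 : ContDiff ℝ 1 G)
    (hγ : IsGeodesicOn (rdist (asTensor G)) γ 1 I) {t : ℝ} (ht : I ∈ 𝓝 t) :
    G (γ t) (deriv γ t) (deriv γ t) = 1 :=
  _root_.bilForm_deriv_self_eq_one hG (hγ.hasDerivAt hG hG1 ht).1 <| by
    simpa [nhdsWithin_eq_nhds.2 ht] using hγ.eventually_rdist_eq (mem_of_mem_nhds ht)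

end IsGeodesicOn

end Geodesic

section ConeForm

variable {E : Type*} [NormedAddCommGroup E] [InnerProductSpace ℝ E] {c : ℝ} {x : E}

/-- The cone metric `dρ ⊗ dρ + c ρ² g_S` in Cartesian coordinates, where `g_S` is the round metric
of the unit sphere; the cone of opening angle `α` corresponds to `c = sin² α`. -/
def coneForm (c : ℝ) (x : E) : BilForm E :=
  ((1 - c) / ‖x‖ ^ 2) • (innerSL ℝ x).smulRight (innerSL ℝ x) + c • euclForm E

lemma coneForm_apply (c : ℝ) (x v w : E) :
    coneForm c x v w = (1 - c) * (⟪x, v⟫ * ⟪x, w⟫ / ‖x‖ ^ 2) + c * ⟪v, w⟫ := by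
  simp [coneForm]
  ring

lemma asTensor_coneForm {n : ℕ} (α : ℝ) :
    asTensor (coneForm (sin α ^ 2)) = coneMetric n α := by
  funext x v w
  simp only [asTensor, coneForm_apply, coneMetric, real_inner_comm x]

lemma differentiableAt_coneForm (c : ℝ) (hx : x ≠ 0) : DifferentiableAt ℝ (coneForm c) x := by
  have hcoef : DifferentiableAt ℝ (fun y : E => (1 - c) / ‖y‖ ^ 2) x :=
    ((differentiableAt_fun_id.norm_sq ℝ).fun_inv (by simpa using hx)).const_mul (1 - c)
  have hsq : Differentiable ℝ fun y : E => (innerSL ℝ y).smulRight (innerSL ℝ y) := fun y =>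
    ((ContinuousLinearMap.smulRightL ℝ E (E →L[ℝ] ℝ)).differentiableAt.comp y
      (innerSL ℝ).differentiableAt).clm_apply (innerSL ℝ).differentiableAt
  exact (hcoef.smul (hsq x)).add_const _

lemma fderiv_coneForm_apply (c : ℝ) (hx : x ≠ 0) (y v : E) :
    fderiv ℝ (coneForm c) x y v v =
      2 * (1 - c) * (⟪x, v⟫ * ⟪y, v⟫ / ‖x‖ ^ 2 - ⟪x, v⟫ ^ 2 * ⟪x, y⟫ / ‖x‖ ^ 4) := by
  have hline : HasDerivAt (fun s : ℝ => x + s • y) y 0 := by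
    simpa using ((hasDerivAt_id (0 : ℝ)).smul_const y).const_add x
  have hfderiv : HasDerivAt (fun s : ℝ => coneForm c (x + s • y) v v)
      (fderiv ℝ (coneForm c) x y v v) 0 := by
    have hcomp : HasDerivAt (fun s : ℝ => coneForm c (x + s • y))
        (fderiv ℝ (coneForm c) x y) 0 :=
      HasFDerivAt.comp_hasDerivAt (l := coneForm c) 0
        (by simpa using (differentiableAt_coneForm c hx).hasFDerivAt) hline
    simpa using (hcomp.clm_apply (hasDerivAt_const 0 v)).clm_apply (hasDerivAt_const 0 v)
  have hinner : HasDerivAt (fun s : ℝ => ⟪x + s • y, v⟫) ⟪y, v⟫ 0 := by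
    simpa using hline.inner ℝ (hasDerivAt_const (0 : ℝ) v)
  have hsq : HasDerivAt (fun s : ℝ => ‖x + s • y‖ ^ 2) (2 * ⟪x, y⟫) 0 := by
    simpa using hline.norm_sq
  have hexplicit := (((hinner.mul hinner).div hsq (by simpa using hx)).const_mul (1 - c)).add_const
    (c * ⟪v, v⟫)
  rw [hfderiv.unique (hexplicit.congr_of_eventuallyEq (Eventually.of_forall fun s =>
    coneForm_apply c (x + s • y) v v))]
  have : ‖x‖ ≠ 0 := norm_ne_zero_iff.2 hx
  simp only [zero_smul, add_zero, Pi.mul_apply]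
  field_simp
  ring

lemma mul_norm_sq_le_coneForm (hc : c ≤ 1) (x v : E) : c * ‖v‖ ^ 2 ≤ coneForm c x v v := by
  have : 0 ≤ (1 - c) * (⟪x, v⟫ * ⟪x, v⟫ / ‖x‖ ^ 2) :=
    mul_nonneg (sub_nonneg.2 hc) (div_nonneg (mul_self_nonneg _) (sq_nonneg _))
  rw [coneForm_apply, real_inner_self_eq_norm_sq]
  linarith

lemma norm_coneForm_le (hc₀ : 0 ≤ c) (hc₁ : c ≤ 1) (x : E) : ‖coneForm c x‖ ≤ 1 := by
  refine ContinuousLinearMap.opNorm_le_bound₂ _ zero_le_one fun v w => ?_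
  have hradial : |⟪x, v⟫ * ⟪x, w⟫ / ‖x‖ ^ 2| ≤ ‖v‖ * ‖w‖ := by
    rw [abs_div, abs_mul, abs_of_nonneg (sq_nonneg ‖x‖)]
    refine div_le_of_le_mul₀ (sq_nonneg _) (by positivity) ?_
    calc |⟪x, v⟫| * |⟪x, w⟫| ≤ ‖x‖ * ‖v‖ * (‖x‖ * ‖w‖) :=
          mul_le_mul (abs_real_inner_le_norm x v) (abs_real_inner_le_norm x w) (abs_nonneg _)
            (by positivity)
      _ = ‖v‖ * ‖w‖ * ‖x‖ ^ 2 := by ring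
  rw [coneForm_apply, Real.norm_eq_abs]
  calc _ ≤ (1 - c) * |⟪x, v⟫ * ⟪x, w⟫ / ‖x‖ ^ 2| + c * |⟪v, w⟫| := by
        refine (abs_add_le _ _).trans_eq ?_
        rw [abs_mul, abs_mul, abs_of_nonneg (sub_nonneg.2 hc₁), abs_of_nonneg hc₀]
    _ ≤ (1 - c) * (‖v‖ * ‖w‖) + c * (‖v‖ * ‖w‖) := add_le_add
        (mul_le_mul_of_nonneg_left hradial (sub_nonneg.2 hc₁))
        (mul_le_mul_of_nonneg_left (abs_real_inner_le_norm v w) hc₀)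
    _ = 1 * ‖v‖ * ‖w‖ := by ring

end ConeForm

section MomentumRate

variable {E : Type*} [NormedAddCommGroup E]

section NormedSpace

variable [NormedSpace ℝ E]

/-- The time derivative of the momentum `G(γ̇, B γ)` of the linear vector field `B` along a geodesic
`γ` of `G`, as a function of the position `x` and the velocity `v`. -/
def momentumRate (G : E → BilForm E) (x v : E) (B : E →L[ℝ] E) : ℝ :=
  geodesicForce G x v (B x) + G x v (B v)

lemma hasDerivAt_momentum {G : E → BilForm E} {γ : ℝ → E} {t : ℝ} {v : E}
    (hγ : HasDerivAt γ v t)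
    (hmom : HasDerivAt (fun s => G (γ s) (deriv γ s)) (geodesicForce G (γ t) v) t)
    (B : E →L[ℝ] E) :
    HasDerivAt (fun s => G (γ s) (deriv γ s) (B (γ s))) (momentumRate G (γ t) v B) t := by
  simpa [hγ.deriv, momentumRate] using hmom.clm_apply (B.hasFDerivAt.comp_hasDerivAt t hγ)

lemma abs_momentumRate_sub_le (G H : E → BilForm E) (x v : E) (B : E →L[ℝ] E) :
    |momentumRate G x v B - momentumRate H x v B| ≤
      (‖fderiv ℝ G x - fderiv ℝ H x‖ * ‖x‖ + ‖G x - H x‖) * (‖B‖ * ‖v‖ ^ 2) := by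
  have hforce : |geodesicForce G x v (B x) - geodesicForce H x v (B x)| ≤
      ‖fderiv ℝ G x - fderiv ℝ H x‖ * ‖x‖ * (‖B‖ * ‖v‖ ^ 2) := by
    have h := abs_bilForm_self_le ((fderiv ℝ G x - fderiv ℝ H x) (B x)) v
    have hop : ‖(fderiv ℝ G x - fderiv ℝ H x) (B x)‖ ≤
        ‖fderiv ℝ G x - fderiv ℝ H x‖ * (‖B‖ * ‖x‖) :=
      ContinuousLinearMap.le_opNorm_of_le _ (B.le_opNorm x)
    rw [geodesicForce_apply, geodesicForce_apply, ← mul_sub, abs_mul, abs_of_nonneg (by norm_num)]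
    calc 1 / 2 * |fderiv ℝ G x (B x) v v - fderiv ℝ H x (B x) v v|
        ≤ |fderiv ℝ G x (B x) v v - fderiv ℝ H x (B x) v v| := by
          linarith [abs_nonneg (fderiv ℝ G x (B x) v v - fderiv ℝ H x (B x) v v)]
      _ ≤ ‖fderiv ℝ G x - fderiv ℝ H x‖ * (‖B‖ * ‖x‖) * ‖v‖ ^ 2 :=
          h.trans (mul_le_mul_of_nonneg_right hop (sq_nonneg _))
      _ = _ := by ring
  have hmetric : |G x v (B v) - H x v (B v)| ≤ ‖G x - H x‖ * (‖B‖ * ‖v‖ ^ 2) :=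
    calc |(G x - H x) v (B v)| ≤ ‖G x - H x‖ * ‖v‖ * ‖B v‖ := (G x - H x).le_opNorm₂ v (B v)
      _ ≤ ‖G x - H x‖ * ‖v‖ * (‖B‖ * ‖v‖) := by gcongr; exact B.le_opNorm v
      _ = _ := by ring
  rw [momentumRate, momentumRate, add_sub_add_comm, add_mul]
  exact (abs_add_le _ _).trans (add_le_add hforce hmetric)

end NormedSpace

variable [InnerProductSpace ℝ E] {x : E} {B : E →L[ℝ] E}

lemma momentumRate_coneForm_id (c : ℝ) (hx : x ≠ 0) (v : E) :
    momentumRate (coneForm c) x v (.id ℝ E) = coneForm c x v v := by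
  have : ‖x‖ ≠ 0 := norm_ne_zero_iff.2 hx
  simp only [momentumRate, geodesicForce_apply, ContinuousLinearMap.id_apply,
    fderiv_coneForm_apply c hx, real_inner_self_eq_norm_sq]
  field_simp
  ring

lemma inner_map_eq_neg_of_skew (hB : ∀ v, ⟪B v, v⟫ = 0) (v w : E) : ⟪B v, w⟫ = -⟪v, B w⟫ := by
  have h := hB (v + w)
  simp only [map_add, inner_add_left, inner_add_right, hB] at h
  rw [real_inner_comm (B w) v]
  linarith

/-- Rotations are isometries of the cone. -/
lemma momentumRate_coneForm_of_skew (c : ℝ) (hx : x ≠ 0) (hB : ∀ v, ⟪B v, v⟫ = 0) (v : E) :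
    momentumRate (coneForm c) x v B = 0 := by
  simp only [momentumRate, geodesicForce_apply, fderiv_coneForm_apply c hx, coneForm_apply,
    inner_map_eq_neg_of_skew hB x v, real_inner_comm (B x) x, real_inner_comm (B v) v, hB]
  ring

lemma coneForm_apply_of_skew (c : ℝ) (hB : ∀ v, ⟪B v, v⟫ = 0) (v : E) :
    coneForm c x v (B x) = c * ⟪v, B x⟫ := by
  simp [coneForm_apply, real_inner_comm (B x) x, hB]

end MomentumRate

section Components

variable {E ι : Type*} [NormedAddCommGroup E] [InnerProductSpace ℝ E] [Fintype ι]

lemma bilForm_eq_sum_smul_smulRight (b : OrthonormalBasis ι ℝ E) (B : BilForm E) :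
    B = ∑ i, ∑ j, B (b i) (b j) • (innerSL ℝ (b i)).smulRight (innerSL ℝ (b j)) := by
  ext v w
  conv_lhs => rw [← b.sum_repr' v, ← b.sum_repr' w]
  simp only [map_sum, map_smul, sum_apply, smul_apply, smul_eq_mul, Finset.mul_sum,
    ContinuousLinearMap.smulRight_apply, innerSL_apply_apply]
  rw [Finset.sum_comm]
  refine Finset.sum_congr rfl fun i _ => Finset.sum_congr rfl fun j _ => ?_
  ring

lemma norm_bilForm_le_sum (b : OrthonormalBasis ι ℝ E) (B : BilForm E) :
    ‖B‖ ≤ ∑ i, ∑ j, |B (b i) (b j)| := by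
  conv_lhs => rw [bilForm_eq_sum_smul_smulRight b B]
  refine norm_sum_le_of_le _ fun i _ => norm_sum_le_of_le _ fun j _ => ?_
  simp [norm_smul, ContinuousLinearMap.norm_smulRight_apply]

lemma contDiff_of_components {k : WithTop ℕ∞} (b : OrthonormalBasis ι ℝ E) {G : E → BilForm E}
    (hG : ∀ i j, ContDiff ℝ k fun x => G x (b i) (b j)) : ContDiff ℝ k G := by
  rw [funext fun x => bilForm_eq_sum_smul_smulRight b (G x)]
  exact ContDiff.sum fun i _ => ContDiff.sum fun j _ => (hG i j).fun_smul contDiff_const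

lemma norm_fderiv_le_sum (b : OrthonormalBasis ι ℝ E) {F : E → BilForm E} {x : E}
    (hF : DifferentiableAt ℝ F x) :
    ‖fderiv ℝ F x‖ ≤ ∑ i, ∑ j, ‖fderiv ℝ (fun y => F y (b i) (b j)) x‖ := by
  have hcomp : ∀ i j y, fderiv ℝ F x y (b i) (b j) = fderiv ℝ (fun y => F y (b i) (b j)) x y := by
    intro i j y
    rw [((hF.hasFDerivAt.clm_apply (hasFDerivAt_const (b i) x)).clm_apply
      (hasFDerivAt_const (b j) x)).fderiv]
    simp
  refine ContinuousLinearMap.opNorm_le_bound _ (by positivity) fun y => ?_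
  refine (norm_bilForm_le_sum b _).trans ?_
  simp only [Finset.sum_mul, hcomp]
  exact Finset.sum_le_sum fun i _ => Finset.sum_le_sum fun j _ =>
    (fderiv ℝ (fun y => F y (b i) (b j)) x).le_opNorm y

end Components

/-- Quantitative closeness of a metric `G` to the cone metric `coneForm c` outside the ball of
radius `R`: the difference decays like `C ‖x‖ ^ (-ν)`, its first derivatives one order faster, and
the difference is small in comparison with `c`. -/
structure IsNearConical {E : Type*} [NormedAddCommGroup E] [InnerProductSpace ℝ E]
    (G : E → BilForm E) (c ν C R : ℝ) : Prop where
  c_pos : 0 < c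
  c_le_one : c ≤ 1
  ν_pos : 0 < ν
  ν_le_half : ν ≤ 1 / 2
  C_nonneg : 0 ≤ C
  one_le_R : 1 ≤ R
  norm_sub_le : ∀ x, R ≤ ‖x‖ → ‖G x - coneForm c x‖ ≤ C * ‖x‖ ^ (-ν)
  norm_fderiv_sub_le : ∀ x, R ≤ ‖x‖ →
    ‖fderiv ℝ G x - fderiv ℝ (coneForm c) x‖ ≤ C * ‖x‖ ^ (-ν - 1)
  -- The constant makes the radial momentum of a unit speed geodesic grow at rate at least `1 / 2`.
  small : ∀ x : E, R ≤ ‖x‖ → C * ‖x‖ ^ (-ν) ≤ c ^ 2 / 24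

lemma IsNearConical.mono {E : Type*} [NormedAddCommGroup E] [InnerProductSpace ℝ E]
    {G : E → BilForm E} {c ν C R R' : ℝ} (h : IsNearConical G c ν C R) (hR : R ≤ R') :
    IsNearConical G c ν C R' :=
  { h with
    one_le_R := h.one_le_R.trans hR
    norm_sub_le := fun x hx => h.norm_sub_le x (hR.trans hx)
    norm_fderiv_sub_le := fun x hx => h.norm_fderiv_sub_le x (hR.trans hx)
    small := fun x hx => h.small x (hR.trans hx) }

namespace IsAsympConical

variable {n : ℕ} {α μ : ℝ}

lemma exists_asTensor_eq {g : MetricTensor n} (hg : IsAsympConical n g α μ) :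
    ∃ G : En n → BilForm (En n), asTensor G = g := by
  refine ⟨fun x => (LinearMap.mk₂ ℝ (g x) (hg.add_left x) (hg.smul_left x) (fun v w u => ?_)
    fun a v w => ?_).toContinuousBilinearMap, rfl⟩
  · rw [hg.symm, hg.add_left, hg.symm x w, hg.symm x u]
  · rw [hg.symm, hg.smul_left, hg.symm x w, smul_eq_mul]

variable {G : En n → BilForm (En n)}

lemma contDiff (hg : IsAsympConical n (asTensor G) α μ) : ContDiff ℝ 2 G :=
  contDiff_of_components (EuclideanSpace.basisFun (Fin n) ℝ)
    (by simpa only [EuclideanSpace.basisFun_apply] using hg.reg)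

lemma isRiemannian (hg : IsAsympConical n (asTensor G) α μ) : IsRiemannian G :=
  ⟨hg.contDiff.continuous, hg.symm, hg.posdef⟩

lemma exists_norm_sub_coneForm_le (hg : IsAsympConical n (asTensor G) α μ) :
    ∃ C R, 0 ≤ C ∧ ∀ x : En n, R ≤ ‖x‖ → x ≠ 0 →
      ‖G x - coneForm (sin α ^ 2) x‖ ≤ C * ‖x‖ ^ (-μ) ∧
      ‖fderiv ℝ G x - fderiv ℝ (coneForm (sin α ^ 2)) x‖ ≤ C * ‖x‖ ^ (-μ - 1) := by
  choose C R hC hdecay using hg.decay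
  obtain ⟨R', hR'⟩ := Finite.exists_le fun p : Fin n × Fin n => R p.1 p.2
  refine ⟨∑ i, ∑ j, C i j, R', Finset.sum_nonneg fun i _ => Finset.sum_nonneg fun j _ =>
    (hC i j).le, fun x hx hx0 => ?_⟩
  have hcomp : ∀ i j, (fun y => asTensor G y (EuclideanSpace.single i 1) (EuclideanSpace.single j 1)
        - coneMetric n α y (EuclideanSpace.single i 1) (EuclideanSpace.single j 1)) =
      fun y => (G y - coneForm (sin α ^ 2) y) (EuclideanSpace.basisFun (Fin n) ℝ i)
        (EuclideanSpace.basisFun (Fin n) ℝ j) := by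
    simp [← asTensor_coneForm]
  simp only [hcomp] at hdecay
  have hG : DifferentiableAt ℝ G x := hg.contDiff.differentiable two_ne_zero x
  have hcone : DifferentiableAt ℝ (coneForm (sin α ^ 2)) x := differentiableAt_coneForm _ hx0
  rw [← fderiv_fun_sub hG hcone]
  simp only [Finset.sum_mul]
  constructor
  · refine (norm_bilForm_le_sum (EuclideanSpace.basisFun (Fin n) ℝ) _).trans ?_
    refine Finset.sum_le_sum fun i _ => Finset.sum_le_sum fun j _ => ?_
    simpa [-EuclideanSpace.basisFun_apply] using hdecay i j x ((hR' (i, j)).trans hx) 0 (by simp)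
  · refine (norm_fderiv_le_sum (EuclideanSpace.basisFun (Fin n) ℝ) (hG.fun_sub hcone)).trans ?_
    refine Finset.sum_le_sum fun i _ => Finset.sum_le_sum fun j _ => ?_
    simpa only [norm_iteratedFDeriv_one, Nat.cast_one] using
      hdecay i j x ((hR' (i, j)).trans hx) 1 (by simp)

lemma exists_isNearConical (hα : 0 < sin α) (hμ : 0 < μ)
    (hg : IsAsympConical n (asTensor G) α μ) :
    ∃ ν C R, IsNearConical G (sin α ^ 2) ν C R := by
  obtain ⟨C, R, hC, hdecay⟩ := hg.exists_norm_sub_coneForm_le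
  have hν : 0 < min μ (1 / 2) := lt_min hμ one_half_pos
  have hlim : Tendsto (fun r : ℝ => C * r ^ (-min μ (1 / 2))) atTop (𝓝 0) := by
    simpa using (tendsto_rpow_neg_atTop hν).const_mul C
  have hsmall := hlim.eventually (ge_mem_nhds (show 0 < (sin α ^ 2) ^ 2 / 24 by positivity))
  obtain ⟨R', hR'⟩ := eventually_atTop.1 hsmall
  have hne : ∀ x : En n, max (max 1 R) R' ≤ ‖x‖ → 1 ≤ ‖x‖ ∧ R ≤ ‖x‖ ∧ x ≠ 0 := fun x hx => by
    have h1 : 1 ≤ ‖x‖ := ((le_max_left _ _).trans (le_max_left _ _)).trans hx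
    exact ⟨h1, ((le_max_right _ _).trans (le_max_left _ _)).trans hx,
      norm_pos_iff.1 (one_pos.trans_le h1)⟩
  refine ⟨min μ (1 / 2), C, max (max 1 R) R', by positivity, sin_sq_le_one α, hν, min_le_right _ _,
    hC, (le_max_left _ _).trans (le_max_left _ _), fun x hx => ?_, fun x hx => ?_,
    fun x hx => hR' _ ((le_max_right _ _).trans hx)⟩
  all_goals
    obtain ⟨h1, hR, hx0⟩ := hne x hx
    have hle := min_le_left μ (1 / 2)
  · refine (hdecay x hR hx0).1.trans (mul_le_mul_of_nonneg_left ?_ hC)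
    exact Real.rpow_le_rpow_of_exponent_le h1 (by linarith)
  · refine (hdecay x hR hx0).2.trans (mul_le_mul_of_nonneg_left ?_ hC)
    exact Real.rpow_le_rpow_of_exponent_le h1 (by linarith)

end IsAsympConical

section PointwiseEstimates

variable {E : Type*} [NormedAddCommGroup E] [InnerProductSpace ℝ E] {G : E → BilForm E}
  {c ν C R : ℝ} {x v : E} {B : E →L[ℝ] E}

namespace IsNearConical

lemma ne_zero (h : IsNearConical G c ν C R) (hx : R ≤ ‖x‖) : x ≠ 0 :=
  norm_pos_iff.1 (one_pos.trans_le (h.one_le_R.trans hx))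

lemma norm_sub_le_sq_div (h : IsNearConical G c ν C R) (hx : R ≤ ‖x‖) :
    ‖G x - coneForm c x‖ ≤ c ^ 2 / 24 :=
  (h.norm_sub_le x hx).trans (h.small x hx)

lemma norm_le_two (h : IsNearConical G c ν C R) (hx : R ≤ ‖x‖) : ‖G x‖ ≤ 2 := by
  have hc : c ^ 2 / 24 ≤ 1 := by nlinarith [h.c_pos, h.c_le_one]
  linarith [norm_le_insert' (G x) (coneForm c x), h.norm_sub_le_sq_div hx,
    norm_coneForm_le h.c_pos.le h.c_le_one x]

lemma norm_le_of_unit (h : IsNearConical G c ν C R) (hx : R ≤ ‖x‖) (hv : G x v v = 1) :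
    ‖v‖ ≤ 2 / c := by
  have hc := h.c_pos
  have hc1 := h.c_le_one
  have hdiff : |G x v v - coneForm c x v v| ≤ c ^ 2 / 24 * ‖v‖ ^ 2 :=
    (abs_bilForm_self_le (G x - coneForm c x) v).trans
      (mul_le_mul_of_nonneg_right (h.norm_sub_le_sq_div hx) (sq_nonneg _))
  have hlower := mul_norm_sq_le_coneForm hc1 x v
  have hcv : c ^ 2 / 24 * ‖v‖ ^ 2 ≤ c / 2 * ‖v‖ ^ 2 :=
    mul_le_mul_of_nonneg_right (by nlinarith) (sq_nonneg _)
  have hsq : c * ‖v‖ ^ 2 ≤ 2 := by linarith [(abs_le.1 hdiff).1]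
  refine abs_le_of_sq_le_sq' ?_ (by positivity) |>.2
  rw [div_pow, le_div_iff₀ (by positivity)]
  nlinarith

lemma abs_momentum_le (h : IsNearConical G c ν C R) (hx : R ≤ ‖x‖) (hv : G x v v = 1)
    (B : E →L[ℝ] E) : |G x v (B x)| ≤ 4 / c * ‖B‖ * ‖x‖ := by
  have hc := h.c_pos
  calc |G x v (B x)| ≤ ‖G x‖ * ‖v‖ * ‖B x‖ := (G x).le_opNorm₂ v (B x)
    _ ≤ 2 * (2 / c) * (‖B‖ * ‖x‖) := by
        gcongr
        exacts [h.norm_le_two hx, h.norm_le_of_unit hx hv, B.le_opNorm x]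
    _ = 4 / c * ‖B‖ * ‖x‖ := by ring

lemma abs_momentumRate_sub_coneForm_le (h : IsNearConical G c ν C R) (hx : R ≤ ‖x‖)
    (hv : G x v v = 1) (B : E →L[ℝ] E) :
    |momentumRate G x v B - momentumRate (coneForm c) x v B| ≤
      8 / c ^ 2 * (C * ‖x‖ ^ (-ν)) * ‖B‖ := by
  have hx0 : 0 < ‖x‖ := norm_pos_iff.2 (h.ne_zero hx)
  have hderiv : ‖fderiv ℝ G x - fderiv ℝ (coneForm c) x‖ * ‖x‖ ≤ C * ‖x‖ ^ (-ν) := by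
    rw [← sub_add_cancel (-ν) 1, Real.rpow_add_one hx0.ne', ← mul_assoc]
    exact mul_le_mul_of_nonneg_right (h.norm_fderiv_sub_le x hx) hx0.le
  calc _ ≤ _ := abs_momentumRate_sub_le G (coneForm c) x v B
    _ ≤ (C * ‖x‖ ^ (-ν) + C * ‖x‖ ^ (-ν)) * (‖B‖ * (2 / c) ^ 2) := by
        gcongr
        · have := h.C_nonneg; positivity
        exacts [h.norm_sub_le x hx, h.norm_le_of_unit hx hv]
    _ = 8 / c ^ 2 * (C * ‖x‖ ^ (-ν)) * ‖B‖ := by ring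

lemma half_le_momentumRate_id (h : IsNearConical G c ν C R) (hx : R ≤ ‖x‖) (hv : G x v v = 1) :
    1 / 2 ≤ momentumRate G x v (.id ℝ E) := by
  have hc := h.c_pos
  have hrate : |momentumRate G x v (.id ℝ E) - coneForm c x v v| ≤ 1 / 3 := by
    rw [← momentumRate_coneForm_id c (h.ne_zero hx)]
    calc _ ≤ 8 / c ^ 2 * (C * ‖x‖ ^ (-ν)) * ‖ContinuousLinearMap.id ℝ E‖ :=
          h.abs_momentumRate_sub_coneForm_le hx hv _
      _ ≤ 8 / c ^ 2 * (c ^ 2 / 24) * 1 := by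
          gcongr
          exacts [h.small x hx, ContinuousLinearMap.norm_id_le]
      _ = 1 / 3 := by field_simp; norm_num
  have hmetric : |G x v v - coneForm c x v v| ≤ 1 / 6 :=
    calc |G x v v - coneForm c x v v| ≤ ‖G x - coneForm c x‖ * ‖v‖ ^ 2 :=
          abs_bilForm_self_le (G x - coneForm c x) v
      _ ≤ c ^ 2 / 24 * (2 / c) ^ 2 := by
          gcongr
          exacts [h.norm_sub_le_sq_div hx, h.norm_le_of_unit hx hv]
      _ = 1 / 6 := by field_simp; norm_num
  linarith [(abs_le.1 hrate).1, (abs_le.1 hmetric).2]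

lemma abs_momentumRate_le_of_skew (h : IsNearConical G c ν C R) (hx : R ≤ ‖x‖)
    (hv : G x v v = 1) (hB : ∀ w, ⟪B w, w⟫ = 0) :
    |momentumRate G x v B| ≤ 8 / c ^ 2 * (C * ‖x‖ ^ (-ν)) * ‖B‖ := by
  simpa [momentumRate_coneForm_of_skew c (h.ne_zero hx) hB] using
    h.abs_momentumRate_sub_coneForm_le hx hv B

lemma mul_abs_inner_le_of_skew (h : IsNearConical G c ν C R) (hx : R ≤ ‖x‖) (hv : G x v v = 1)
    (hB : ∀ w, ⟪B w, w⟫ = 0) :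
    c * |⟪v, B x⟫| ≤ |G x v (B x)| + 2 / c * C * ‖x‖ ^ (1 - ν) * ‖B‖ := by
  have hc := h.c_pos
  have hdiff : |coneForm c x v (B x) - G x v (B x)| ≤ 2 / c * C * ‖x‖ ^ (1 - ν) * ‖B‖ :=
    calc |coneForm c x v (B x) - G x v (B x)| ≤ ‖G x - coneForm c x‖ * ‖v‖ * ‖B x‖ := by
          rw [abs_sub_comm]; exact (G x - coneForm c x).le_opNorm₂ v (B x)
      _ ≤ C * ‖x‖ ^ (-ν) * (2 / c) * (‖B‖ * ‖x‖) := by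
          have := h.C_nonneg
          gcongr
          exacts [h.norm_sub_le x hx, h.norm_le_of_unit hx hv, B.le_opNorm x]
      _ = 2 / c * C * ‖x‖ ^ (1 - ν) * ‖B‖ := by
          rw [sub_eq_neg_add, Real.rpow_add_one (norm_ne_zero_iff.2 (h.ne_zero hx))]
          ring
  rw [← abs_of_pos hc, ← abs_mul, ← coneForm_apply_of_skew c hB, abs_of_pos hc]
  linarith [abs_sub_abs_le_abs_sub (coneForm c x v (B x)) (G x v (B x))]

end IsNearConical

end PointwiseEstimates

section Angular

variable {E : Type*} [NormedAddCommGroup E] [InnerProductSpace ℝ E]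

/-- The infinitesimal rotation in the plane spanned by `y` and `z`. -/
def infinitesimalRotation (y z : E) : E →L[ℝ] E :=
  (innerSL ℝ y).smulRight z - (innerSL ℝ z).smulRight y

lemma infinitesimalRotation_apply (y z x : E) :
    infinitesimalRotation y z x = ⟪y, x⟫ • z - ⟪z, x⟫ • y := rfl

lemma inner_infinitesimalRotation_self (y z x : E) : ⟪infinitesimalRotation y z x, x⟫ = 0 := by
  rw [infinitesimalRotation_apply, inner_sub_left, real_inner_smul_left, real_inner_smul_left]
  ring

lemma norm_infinitesimalRotation_le (y z : E) : ‖infinitesimalRotation y z‖ ≤ 2 * ‖y‖ * ‖z‖ := by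
  refine (norm_sub_le _ _).trans_eq ?_
  rw [ContinuousLinearMap.norm_smulRight_apply, ContinuousLinearMap.norm_smulRight_apply,
    innerSL_apply_norm, innerSL_apply_norm]
  ring

lemma hasDerivAt_normalize {γ : ℝ → E} {t : ℝ} {v : E} (hγ : HasDerivAt γ v t) (hγt : γ t ≠ 0) :
    HasDerivAt (fun s => NormedSpace.normalize (γ s))
      (‖γ t‖⁻¹ • v - (⟪γ t, v⟫ / ‖γ t‖ ^ 3) • γ t) t := by
  have hne : ‖γ t‖ ≠ 0 := norm_ne_zero_iff.2 hγt
  have hnorm : HasDerivAt (fun s => ‖γ s‖) (⟪γ t, v⟫ / ‖γ t‖) t := by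
    have h := hγ.norm_sq.sqrt (pow_ne_zero 2 hne)
    simp only [Real.sqrt_sq (norm_nonneg _)] at h
    exact h.congr_deriv (by field_simp)
  refine ((hnorm.fun_inv hne).fun_smul hγ).congr_deriv ?_
  rw [sub_eq_add_neg, ← neg_smul]
  congr 2
  field_simp

lemma norm_deriv_normalize_le {x v : E} {M : ℝ} (hx : x ≠ 0) (hM₀ : 0 ≤ M)
    (hM : ∀ B : E →L[ℝ] E, (∀ w, ⟪B w, w⟫ = 0) → |⟪v, B x⟫| ≤ M * ‖B‖) :
    ‖‖x‖⁻¹ • v - (⟪x, v⟫ / ‖x‖ ^ 3) • x‖ ≤ 2 * M / ‖x‖ ^ 2 := by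
  set w : E := ‖x‖⁻¹ • v - (⟪x, v⟫ / ‖x‖ ^ 3) • x with hw
  have hx0 : 0 < ‖x‖ := norm_pos_iff.2 hx
  have hxw : ⟪x, w⟫ = 0 := by
    rw [hw, inner_sub_right, real_inner_smul_right, real_inner_smul_right,
      real_inner_self_eq_norm_sq]
    field_simp
    ring
  have hvw : ⟪v, w⟫ = ‖x‖ * ‖w‖ ^ 2 := by
    have hv : v = ‖x‖ • w + (⟪x, v⟫ / ‖x‖ ^ 2) • x := by
      rw [hw, smul_sub, smul_inv_smul₀ hx0.ne', smul_smul, mul_div_assoc']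
      field_simp
      simp
    rw [hv, inner_add_left, real_inner_smul_left, real_inner_smul_left, hxw,
      real_inner_self_eq_norm_sq]
    ring
  have hrot : ⟪v, infinitesimalRotation x w x⟫ = ‖x‖ ^ 3 * ‖w‖ ^ 2 := by
    rw [infinitesimalRotation_apply, real_inner_comm x w, hxw, zero_smul, sub_zero,
      real_inner_smul_right, real_inner_self_eq_norm_sq, hvw]
    ring
  have hbound : ‖x‖ ^ 3 * ‖w‖ ^ 2 ≤ M * (2 * ‖x‖ * ‖w‖) :=
    calc ‖x‖ ^ 3 * ‖w‖ ^ 2 = |⟪v, infinitesimalRotation x w x⟫| := by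
          rw [hrot, abs_of_nonneg (by positivity)]
      _ ≤ M * ‖infinitesimalRotation x w‖ := hM _ (inner_infinitesimalRotation_self x w)
      _ ≤ M * (2 * ‖x‖ * ‖w‖) := by gcongr; exact norm_infinitesimalRotation_le x w
  rcases (norm_nonneg w).eq_or_lt with hw0 | hw0
  · rw [← hw0]; positivity
  · rw [le_div_iff₀ (by positivity)]
    refine le_of_mul_le_mul_right ?_ (mul_pos hx0 hw0)
    linarith

end Angular

section PowerGrowth

lemma norm_sub_le_mul_rpow_sub_rpow {F : Type*} [NormedAddCommGroup F] [NormedSpace ℝ F]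
    {f f' : ℝ → F} {t₀ a b K p : ℝ} (hta : t₀ ≤ a) (hab : a ≤ b) (hf : ContinuousOn f (Icc a b))
    (hf' : ∀ t ∈ Ico a b, HasDerivAt f (f' t) t)
    (hbound : ∀ t ∈ Ico a b, ‖f' t‖ ≤ K * (p * (1 + t - t₀) ^ (p - 1))) :
    ‖f b - f a‖ ≤ K * ((1 + b - t₀) ^ p - (1 + a - t₀) ^ p) := by
  have hpos : ∀ t ∈ Icc a b, 0 < 1 + t - t₀ := fun t ht => by linarith [ht.1]
  have hderiv : ∀ t ∈ Icc a b, HasDerivAt (fun t => K * ((1 + t - t₀) ^ p - (1 + a - t₀) ^ p))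
      (K * (p * (1 + t - t₀) ^ (p - 1))) t := fun t ht => by
    have hshift : HasDerivAt (fun t => 1 + t - t₀) 1 t :=
      ((hasDerivAt_id t).const_add 1).sub_const t₀
    have h := (hshift.rpow_const (p := p) (Or.inl (hpos t ht).ne')).sub_const ((1 + a - t₀) ^ p)
    simpa using h.const_mul K
  exact image_norm_le_of_norm_deriv_right_le_deriv_boundary' (f := fun t => f t - f a)
    (hf.sub continuousOn_const)
    (fun t ht => ((hf' t ht).sub_const _).hasDerivWithinAt) (by simp)
    (fun t ht => (hderiv t ht).continuousAt.continuousWithinAt)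
    (fun t ht => (hderiv t (Ico_subset_Icc_self ht)).hasDerivWithinAt) hbound
    (right_mem_Icc.2 hab)

lemma rpow_neg_le_mul_rpow_neg {x y D ν : ℝ} (hx : 0 < x) (hy : 0 < y) (hD : 1 ≤ D)
    (h : y ≤ D * x) (hν₀ : 0 ≤ ν) (hν₁ : ν ≤ 1) : x ^ (-ν) ≤ D * y ^ (-ν) := by
  have hD0 : 0 < D := one_pos.trans_le hD
  calc x ^ (-ν) = D ^ ν * (D * x) ^ (-ν) := by
        rw [Real.mul_rpow hD0.le hx.le, ← mul_assoc, ← Real.rpow_add hD0, add_neg_cancel,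
          Real.rpow_zero, one_mul]
    _ ≤ D ^ (1 : ℝ) * y ^ (-ν) := mul_le_mul (Real.rpow_le_rpow_of_exponent_le hD hν₁)
        (Real.rpow_le_rpow_of_nonpos hy h (neg_nonpos.2 hν₀)) (by positivity) (by positivity)
    _ = D * y ^ (-ν) := by rw [Real.rpow_one]

lemma rpow_le_mul_rpow {x y D p : ℝ} (hx : 0 ≤ x) (hy : 0 ≤ y) (hD : 1 ≤ D) (h : x ≤ D * y)
    (hp₀ : 0 ≤ p) (hp₁ : p ≤ 1) : x ^ p ≤ D * y ^ p := by
  have hD0 : 0 ≤ D := zero_le_one.trans hD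
  calc x ^ p ≤ (D * y) ^ p := Real.rpow_le_rpow hx h hp₀
    _ = D ^ p * y ^ p := Real.mul_rpow hD0 hy
    _ ≤ D ^ (1 : ℝ) * y ^ p := by gcongr
    _ = D * y ^ p := by rw [Real.rpow_one]

end PowerGrowth

section OutgoingGeodesic

variable {E : Type*} [NormedAddCommGroup E] [InnerProductSpace ℝ E] {G : E → BilForm E}
  {c ν C R : ℝ} {γ : ℝ → E} {a b t : ℝ}

/-- A unit speed geodesic segment of the metric `G` that starts on the sphere of radius `R` and
stays outside of it. The geodesic equation is required in momentum form; as the geodesics of a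
distance on a closed interval need not be differentiable at its endpoints, nothing is required at
`b` except continuity. -/
structure IsOutgoingGeodesic (G : E → BilForm E) (R : ℝ) (γ : ℝ → E) (a b : ℝ) : Prop where
  continuousOn : ContinuousOn γ (Icc a b)
  hasDerivAt : ∀ t ∈ Ico a b, HasDerivAt γ (deriv γ t) t
  unit_speed : ∀ t ∈ Ico a b, G (γ t) (deriv γ t) (deriv γ t) = 1
  hasDerivAt_momentum : ∀ t ∈ Ico a b,
    HasDerivAt (fun s => G (γ s) (deriv γ s)) (geodesicForce G (γ t) (deriv γ t)) t
  norm_left : ‖γ a‖ = R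
  le_norm : ∀ t ∈ Icc a b, R ≤ ‖γ t‖

namespace IsOutgoingGeodesic

lemma norm_le_mul (hγ : IsOutgoingGeodesic G R γ a b) (h : IsNearConical G c ν C R)
    (ht : t ∈ Icc a b) : ‖γ t‖ ≤ (R + 2 / c) * (1 + t - a) := by
  have hspeed : ‖γ t - γ a‖ ≤ 2 / c * (t - a) :=
    norm_image_sub_le_of_norm_deriv_right_le_segment hγ.continuousOn
      (fun s hs => (hγ.hasDerivAt s hs).hasDerivWithinAt)
      (fun s hs => h.norm_le_of_unit (hγ.le_norm s (Ico_subset_Icc_self hs)) (hγ.unit_speed s hs))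
      t ht
  have hc : 0 < 2 / c := div_pos two_pos h.c_pos
  have hta : 0 ≤ R * (t - a) := mul_nonneg (zero_le_one.trans h.one_le_R) (sub_nonneg.2 ht.1)
  linarith [norm_le_insert' (γ t) (γ a), hγ.norm_left]

lemma hasDerivAt_momentum_apply (hγ : IsOutgoingGeodesic G R γ a b) (ht : t ∈ Ico a b)
    (B : E →L[ℝ] E) : HasDerivAt (fun s => G (γ s) (deriv γ s) (B (γ s)))
      (momentumRate G (γ t) (deriv γ t) B) t :=
  _root_.hasDerivAt_momentum (hγ.hasDerivAt t ht) (hγ.hasDerivAt_momentum t ht) B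

/-- The radial momentum grows at least linearly, but is at most a multiple of the radius. -/
lemma add_sub_le_mul_norm (hγ : IsOutgoingGeodesic G R γ a b) (h : IsNearConical G c ν C R)
    (ht : t ∈ Ico a b) : 1 + t - a ≤ (1 + 16 / c) * ‖γ t‖ := by
  have hc := h.c_pos
  have hsub : Icc a t ⊆ Ico a b := Icc_subset_Ico_right ht.2
  set P : ℝ → ℝ := fun s => G (γ s) (deriv γ s) (ContinuousLinearMap.id ℝ E (γ s))
  have hP : ∀ s ∈ Icc a t, HasDerivAt P (momentumRate G (γ s) (deriv γ s) (.id ℝ E)) s :=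
    fun s hs => hγ.hasDerivAt_momentum_apply (hsub hs) (.id ℝ E)
  have hgrowth : 1 / 2 * (t - a) ≤ P t - P a := by
    refine (convex_Icc a t).mul_sub_le_image_sub_of_le_deriv
      (fun s hs => (hP s hs).continuousAt.continuousWithinAt)
      (fun s hs => (hP s (interior_subset hs)).differentiableAt.differentiableWithinAt)
      (fun s hs => ?_) a (left_mem_Icc.2 ht.1) t (right_mem_Icc.2 ht.1) ht.1
    rw [(hP s (interior_subset hs)).deriv]
    have hs' := hsub (interior_subset hs)
    exact h.half_le_momentumRate_id (hγ.le_norm s (Ico_subset_Icc_self hs')) (hγ.unit_speed s hs')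
  have hbound : ∀ s ∈ Icc a t, |P s| ≤ 4 / c * ‖γ s‖ := fun s hs => by
    refine (h.abs_momentum_le (hγ.le_norm s (Ico_subset_Icc_self (hsub hs)))
      (hγ.unit_speed s (hsub hs)) (.id ℝ E)).trans ?_
    gcongr
    exact mul_le_of_le_one_right (by positivity) ContinuousLinearMap.norm_id_le
  have hR : R ≤ ‖γ t‖ := hγ.le_norm t (Ico_subset_Icc_self ht)
  have hPa : |P a| ≤ 4 / c * ‖γ t‖ := (hbound a (left_mem_Icc.2 ht.1)).trans <| by
    rw [hγ.norm_left]; gcongr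
  have hPt := hbound t (right_mem_Icc.2 ht.1)
  have h16 : 16 / c * ‖γ t‖ = 4 * (4 / c * ‖γ t‖) := by ring
  linarith [(abs_le.1 hPa).1, (abs_le.1 hPt).2, h.one_le_R]

lemma abs_momentumRate_le_mul_rpow (hγ : IsOutgoingGeodesic G R γ a b)
    (h : IsNearConical G c ν C R) (ht : t ∈ Ico a b) {B : E →L[ℝ] E} (hB : ∀ w, ⟪B w, w⟫ = 0) :
    |momentumRate G (γ t) (deriv γ t) B| ≤
      8 / c ^ 2 * (C * (1 + 16 / c)) * ‖B‖ * (1 + t - a) ^ (-ν) := by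
  have hc := h.c_pos
  have hC := h.C_nonneg
  have hR : R ≤ ‖γ t‖ := hγ.le_norm t (Ico_subset_Icc_self ht)
  calc |momentumRate G (γ t) (deriv γ t) B| ≤ 8 / c ^ 2 * (C * ‖γ t‖ ^ (-ν)) * ‖B‖ :=
        h.abs_momentumRate_le_of_skew hR (hγ.unit_speed t ht) hB
    _ ≤ 8 / c ^ 2 * (C * ((1 + 16 / c) * (1 + t - a) ^ (-ν))) * ‖B‖ := by
        gcongr
        exact rpow_neg_le_mul_rpow_neg (norm_pos_iff.2 (h.ne_zero hR)) (by linarith [ht.1])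
          (le_add_of_nonneg_right (by positivity)) (hγ.add_sub_le_mul_norm h ht) h.ν_pos.le
          (by linarith [h.ν_le_half])
    _ = 8 / c ^ 2 * (C * (1 + 16 / c)) * ‖B‖ * (1 + t - a) ^ (-ν) := by ring

end IsOutgoingGeodesic

namespace IsNearConical

lemma exists_abs_momentum_le_mul_rpow (h : IsNearConical G c ν C R) :
    ∃ K, 0 ≤ K ∧ ∀ γ a b, IsOutgoingGeodesic G R γ a b → ∀ t ∈ Ico a b, ∀ B : E →L[ℝ] E,
      (∀ w, ⟪B w, w⟫ = 0) →
        |G (γ t) (deriv γ t) (B (γ t))| ≤ K * ‖B‖ * (1 + t - a) ^ (1 - ν) := by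
  have hc := h.c_pos
  have hC := h.C_nonneg
  have hR : 0 ≤ R := zero_le_one.trans h.one_le_R
  have hν : 1 / 2 ≤ 1 - ν := by linarith [h.ν_le_half]
  set K₁ : ℝ := 8 / c ^ 2 * (C * (1 + 16 / c))
  refine ⟨4 / c * R + 2 * K₁, by positivity, fun γ a b hγ t ht B hB => ?_⟩
  have hsub : Icc a t ⊆ Ico a b := Icc_subset_Ico_right ht.2
  set Q : ℝ → ℝ := fun s => G (γ s) (deriv γ s) (B (γ s))
  have hQ : ∀ s ∈ Icc a t, HasDerivAt Q (momentumRate G (γ s) (deriv γ s) B) s := fun s hs =>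
    hγ.hasDerivAt_momentum_apply (hsub hs) B
  have hrate : ∀ s ∈ Ico a t, ‖momentumRate G (γ s) (deriv γ s) B‖ ≤
      2 * K₁ * ‖B‖ * ((1 - ν) * (1 + s - a) ^ (1 - ν - 1)) := fun s hs => by
    have hpos : 0 < 1 + s - a := by linarith [hs.1]
    rw [sub_sub_cancel_left]
    calc ‖momentumRate G (γ s) (deriv γ s) B‖ ≤ K₁ * ‖B‖ * (1 + s - a) ^ (-ν) :=
          hγ.abs_momentumRate_le_mul_rpow h (hsub (Ico_subset_Icc_self hs)) hB
      _ = 2 * K₁ * ‖B‖ * (1 / 2 * (1 + s - a) ^ (-ν)) := by ring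
      _ ≤ 2 * K₁ * ‖B‖ * ((1 - ν) * (1 + s - a) ^ (-ν)) := by gcongr
  have hvar := norm_sub_le_mul_rpow_sub_rpow le_rfl ht.1
    (fun s hs => (hQ s hs).continuousAt.continuousWithinAt)
    (fun s hs => hQ s (Ico_subset_Icc_self hs)) hrate
  have hleft : |Q a| ≤ 4 / c * R * ‖B‖ := by
    have ha := left_mem_Icc.2 ht.1
    refine (h.abs_momentum_le hγ.norm_left.ge (hγ.unit_speed a (hsub ha)) B).trans_eq ?_
    rw [hγ.norm_left]; ring
  have hone : 1 ≤ (1 + t - a) ^ (1 - ν) :=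
    Real.one_le_rpow (by linarith [ht.1]) (by linarith)
  rw [add_sub_cancel_right, Real.one_rpow, Real.norm_eq_abs] at hvar
  calc |Q t| ≤ |Q a| + |Q t - Q a| := by linarith [abs_sub_abs_le_abs_sub (Q t) (Q a)]
    _ ≤ 4 / c * R * ‖B‖ * (1 + t - a) ^ (1 - ν) + 2 * K₁ * ‖B‖ * (1 + t - a) ^ (1 - ν) := by
        refine add_le_add (hleft.trans (le_mul_of_one_le_right (by positivity) hone))
          (hvar.trans ?_)
        gcongr
        linarith
    _ = (4 / c * R + 2 * K₁) * ‖B‖ * (1 + t - a) ^ (1 - ν) := by ring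

lemma exists_abs_inner_le_mul_rpow (h : IsNearConical G c ν C R) :
    ∃ M, 0 ≤ M ∧ ∀ γ a b, IsOutgoingGeodesic G R γ a b → ∀ t ∈ Ico a b, ∀ B : E →L[ℝ] E,
      (∀ w, ⟪B w, w⟫ = 0) → |⟪deriv γ t, B (γ t)⟫| ≤ M * (1 + t - a) ^ (1 - ν) * ‖B‖ := by
  obtain ⟨K, hK, hmom⟩ := h.exists_abs_momentum_le_mul_rpow
  have hc := h.c_pos
  have hC := h.C_nonneg
  have hR := h.one_le_R
  set L : ℝ := R + 2 / c
  have hL : 1 ≤ L := hR.trans (le_add_of_nonneg_right (by positivity))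
  refine ⟨(K + 2 / c * C * L) / c, by positivity, fun γ a b hγ t ht B hB => ?_⟩
  have ht' := Ico_subset_Icc_self ht
  have hs : 0 ≤ 1 + t - a := by linarith [ht.1]
  have hpow : ‖γ t‖ ^ (1 - ν) ≤ L * (1 + t - a) ^ (1 - ν) :=
    rpow_le_mul_rpow (norm_nonneg _) hs hL (hγ.norm_le_mul h ht') (by linarith [h.ν_le_half])
      (by linarith [h.ν_pos])
  rw [div_mul_eq_mul_div, div_mul_eq_mul_div, le_div_iff₀' hc]
  calc c * |⟪deriv γ t, B (γ t)⟫|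
      ≤ |G (γ t) (deriv γ t) (B (γ t))| + 2 / c * C * ‖γ t‖ ^ (1 - ν) * ‖B‖ :=
        h.mul_abs_inner_le_of_skew (hγ.le_norm t ht') (hγ.unit_speed t ht) hB
    _ ≤ K * ‖B‖ * (1 + t - a) ^ (1 - ν) + 2 / c * C * (L * (1 + t - a) ^ (1 - ν)) * ‖B‖ := by
        gcongr
        exact hmom γ a b hγ t ht B hB
    _ = (K + 2 / c * C * L) * (1 + t - a) ^ (1 - ν) * ‖B‖ := by ring

/-- The left-hand side is the angular velocity, see `hasDerivAt_normalize`. -/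
lemma exists_norm_deriv_normalize_le_mul_rpow (h : IsNearConical G c ν C R) :
    ∃ K, 0 ≤ K ∧ ∀ γ a b, IsOutgoingGeodesic G R γ a b → ∀ t ∈ Ico a b,
      ‖‖γ t‖⁻¹ • deriv γ t - (⟪γ t, deriv γ t⟫ / ‖γ t‖ ^ 3) • γ t‖ ≤
        K * (1 + t - a) ^ (-ν - 1) := by
  obtain ⟨M, hM, hinner⟩ := h.exists_abs_inner_le_mul_rpow
  have hc := h.c_pos
  set D : ℝ := 1 + 16 / c
  refine ⟨2 * M * D ^ 2, by positivity, fun γ a b hγ t ht => ?_⟩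
  have hγt : γ t ≠ 0 := h.ne_zero (hγ.le_norm t (Ico_subset_Icc_self ht))
  have hpos : 0 < 1 + t - a := by linarith [ht.1]
  calc _ ≤ 2 * (M * (1 + t - a) ^ (1 - ν)) / ‖γ t‖ ^ 2 :=
        norm_deriv_normalize_le hγt (by positivity) (hinner γ a b hγ t ht)
    _ ≤ 2 * (M * (1 + t - a) ^ (1 - ν)) / ((1 + t - a) / D) ^ 2 := by
        gcongr
        exact (div_le_iff₀' (by positivity)).2 (hγ.add_sub_le_mul_norm h ht)
    _ = 2 * M * D ^ 2 * (1 + t - a) ^ (-ν - 1) := by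
        rw [show 1 - ν = -ν - 1 + 2 by ring, Real.rpow_add hpos, Real.rpow_two]
        field_simp

lemma exists_norm_normalize_sub_le (h : IsNearConical G c ν C R) :
    ∃ K, ∀ γ a b, IsOutgoingGeodesic G R γ a b → ∀ t ∈ Icc a b,
      ‖NormedSpace.normalize (γ b) - NormedSpace.normalize (γ t)‖ ≤ K * ‖γ t‖ ^ (-ν) := by
  obtain ⟨K, hK, hvel⟩ := h.exists_norm_deriv_normalize_le_mul_rpow
  have hν := h.ν_pos
  set L : ℝ := R + 2 / c
  have hL : 1 ≤ L := h.one_le_R.trans (le_add_of_nonneg_right (div_pos two_pos h.c_pos).le)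
  refine ⟨K / ν * L, fun γ a b hγ t ht => ?_⟩
  have hne : ∀ s ∈ Icc a b, γ s ≠ 0 := fun s hs => h.ne_zero (hγ.le_norm s hs)
  have hsub : Icc t b ⊆ Icc a b := Icc_subset_Icc_left ht.1
  have hcont : ContinuousOn (fun s => NormedSpace.normalize (γ s)) (Icc t b) :=
    ((hγ.continuousOn.norm.inv₀ fun s hs => norm_ne_zero_iff.2 (hne s hs)).smul
      hγ.continuousOn).mono hsub
  have hvar := norm_sub_le_mul_rpow_sub_rpow (K := -(K / ν)) (p := -ν) ht.1 ht.2 hcont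
    (fun s hs => hasDerivAt_normalize (hγ.hasDerivAt s (Ico_subset_Ico_left ht.1 hs))
      (hne s (hsub (Ico_subset_Icc_self hs))))
    fun s hs => (hvel γ a b hγ s (Ico_subset_Ico_left ht.1 hs)).trans_eq (by field_simp)
  have hb : 0 ≤ K / ν * (1 + b - a) ^ (-ν) := by
    have : 0 ≤ 1 + b - a := by linarith [ht.1, ht.2]
    positivity
  calc _ ≤ K / ν * (1 + t - a) ^ (-ν) := by linarith
    _ ≤ K / ν * (L * ‖γ t‖ ^ (-ν)) := by
        gcongr
        exact rpow_neg_le_mul_rpow_neg (by linarith [ht.1]) (norm_pos_iff.2 (hne t ht)) hL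
          (hγ.norm_le_mul h ht) hν.le (by linarith [h.ν_le_half])
    _ = K / ν * L * ‖γ t‖ ^ (-ν) := by ring

end IsNearConical

end OutgoingGeodesic

section LastExit

variable {n : ℕ} {G : En n → BilForm (En n)} {R : ℝ} {γ : ℝ → En n} {a b : ℝ}

lemma IsGeodesicOn.exists_isOutgoingGeodesic (hG : IsRiemannian G) (hG1 : ContDiff ℝ 1 G)
    (hγ : IsGeodesicOn (rdist (asTensor G)) γ 1 (Icc a b)) (hin : ∃ t ∈ Icc a b, ‖γ t‖ < R)
    (hb : R ≤ ‖γ b‖) : ∃ τ ∈ Icc a b, IsOutgoingGeodesic G R γ τ b := by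
  have hcont := hγ.continuousOn hG
  obtain ⟨t, ht, htR⟩ := hin
  obtain ⟨τ, hτ, hτR, hstay⟩ := exists_last_hit (hcont.norm.mono (Icc_subset_Icc_left ht.1)) hb
    ⟨t, left_mem_Icc.2 ht.2, htR.le⟩
  have htτ : t < τ := hτ.1.lt_of_ne fun h => htR.ne (h ▸ hτR)
  have hnhds : ∀ s ∈ Ico τ b, Icc a b ∈ 𝓝 s := fun s hs =>
    Icc_mem_nhds ((ht.1.trans_lt htτ).trans_le hs.1) hs.2
  have hτ' : τ ∈ Icc a b := ⟨ht.1.trans hτ.1, hτ.2⟩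
  exact ⟨τ, hτ',
    { continuousOn := hcont.mono (Icc_subset_Icc_left hτ'.1)
      hasDerivAt := fun s hs => (hγ.hasDerivAt hG hG1 (hnhds s hs)).1
      unit_speed := fun s hs => hγ.bilForm_deriv_self_eq_one hG hG1 (hnhds s hs)
      hasDerivAt_momentum := fun s hs => (hγ.hasDerivAt hG hG1 (hnhds s hs)).2
      norm_left := hτR
      le_norm := hstay }⟩

lemma IsOutgoingGeodesic.le_of_isGreatest {τ r t : ℝ} (hγ : IsOutgoingGeodesic G R γ τ b)
    (hτ : τ ∈ Icc a b) (hR : R ≤ r) (hb : r ≤ ‖γ b‖)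
    (ht : IsGreatest {t | t ∈ Icc a b ∧ ‖γ t‖ = r} t) : τ ≤ t := by
  obtain ⟨s, hs, hsr⟩ := intermediate_value_Icc hτ.2 hγ.continuousOn.norm
    ⟨hγ.norm_left.trans_le hR, hb⟩
  exact hs.1.trans (ht.2 ⟨Icc_subset_Icc_left hτ.1 hs, hsr⟩)

end LastExit

section ExitDirection

variable {n : ℕ} {g : MetricTensor n} {α μ : ℝ}

theorem IsAsympConical.exists_norm_exit_direction_sub_le (hα : 0 < sin α) (hμ : 0 < μ)
    (hg : IsAsympConical n g α μ) (R₀ : ℝ) {δ : ℝ} (hδ : 0 < δ) :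
    ∃ R, R₀ ≤ R ∧ ∀ (γ : ℝ → En n) (a b r t : ℝ), IsGeodesicOn (rdist g) γ 1 (Icc a b) →
      (∃ s ∈ Icc a b, ‖γ s‖ ≤ R₀) → R < r → r ≤ ‖γ b‖ →
      IsGreatest {t | t ∈ Icc a b ∧ ‖γ t‖ = r} t →
      ‖r⁻¹ • γ t - NormedSpace.normalize (γ b)‖ ≤ δ := by
  obtain ⟨G, rfl⟩ := hg.exists_asTensor_eq
  obtain ⟨ν, C, R₁, hcone⟩ := hg.exists_isNearConical hα hμ
  set R₂ := max (R₀ + 1) R₁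
  have hR₂ : R₀ < R₂ := (lt_add_one R₀).trans_le (le_max_left _ _)
  obtain ⟨K, hK⟩ := (hcone.mono (le_max_right (R₀ + 1) R₁)).exists_norm_normalize_sub_le
  have hlim : Tendsto (fun r : ℝ => K * r ^ (-ν)) atTop (𝓝 0) := by
    simpa using (tendsto_rpow_neg_atTop hcone.ν_pos).const_mul K
  obtain ⟨R, hR⟩ := eventually_atTop.1 (hlim.eventually (ge_mem_nhds hδ))
  refine ⟨max R R₂, hR₂.le.trans (le_max_right _ _), fun γ a b r t hγ hin hr hb ht => ?_⟩
  obtain ⟨s, hs, hsR⟩ := hin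
  have hr₂ : R₂ ≤ r := (le_max_right _ _).trans hr.le
  obtain ⟨τ, hτ, hout⟩ := hγ.exists_isOutgoingGeodesic hg.isRiemannian
    (hg.contDiff.of_le one_le_two) ⟨s, hs, hsR.trans_lt hR₂⟩ (hr₂.trans hb)
  have hτt : τ ≤ t := hout.le_of_isGreatest hτ hr₂ hb ht
  obtain ⟨⟨htI, htr⟩, -⟩ := ht
  have hturn := hK γ τ b hout t ⟨hτt, htI.2⟩
  rw [norm_sub_rev, NormedSpace.normalize, htr] at hturn
  exact hturn.trans (hR r ((le_max_left _ _).trans hr.le))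

lemma IsGeodesicOn.comp_neg {d : En n → En n → ℝ} {γ : ℝ → En n} {c : ℝ} {I : Set ℝ}
    (h : IsGeodesicOn d γ c I) : IsGeodesicOn d (fun t => γ (-t)) c (Neg.neg ⁻¹' I) := by
  intro t ht
  obtain ⟨η, hη, hd⟩ := h (-t) ht
  have habs : ∀ s u : ℝ, |-s - -u| = |s - u| := fun s u => by rw [neg_sub_neg, abs_sub_comm]
  refine ⟨η, hη, fun s hs u hu hst hut => ?_⟩
  rw [hd (-s) hs (-u) hu (by rwa [habs]) (by rwa [habs]), habs]

/-- Reversing time turns the first hit of a sphere into the last one. -/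
theorem IsAsympConical.exists_norm_entry_direction_sub_le (hα : 0 < sin α) (hμ : 0 < μ)
    (hg : IsAsympConical n g α μ) (R₀ : ℝ) {δ : ℝ} (hδ : 0 < δ) :
    ∃ R, R₀ ≤ R ∧ ∀ (γ : ℝ → En n) (a b r t : ℝ), IsGeodesicOn (rdist g) γ 1 (Icc a b) →
      (∃ s ∈ Icc a b, ‖γ s‖ ≤ R₀) → R < r → r ≤ ‖γ a‖ →
      IsLeast {t | t ∈ Icc a b ∧ ‖γ t‖ = r} t →
      ‖r⁻¹ • γ t - NormedSpace.normalize (γ a)‖ ≤ δ := by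
  obtain ⟨R, hR, hexit⟩ := hg.exists_norm_exit_direction_sub_le hα hμ R₀ hδ
  refine ⟨R, hR, fun γ a b r t hγ ⟨s, hs, hsR⟩ hr ha ht => ?_⟩
  have hmem : ∀ u, u ∈ Icc (-b) (-a) ↔ -u ∈ Icc a b := fun u => by
    rw [mem_Icc, mem_Icc, neg_le, le_neg, and_comm]
  have hI : Neg.neg ⁻¹' Icc a b = Icc (-b) (-a) := by ext u; exact (hmem u).symm
  have hlast : IsGreatest {u | u ∈ Icc (-b) (-a) ∧ ‖γ (-u)‖ = r} (-t) :=
    ⟨⟨(hmem _).2 (by simpa using ht.1.1), by simpa using ht.1.2⟩,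
      fun u hu => le_neg.2 (ht.2 ⟨(hmem u).1 hu.1, hu.2⟩)⟩
  have h := hexit (fun u => γ (-u)) (-b) (-a) r (-t) (hI ▸ hγ.comp_neg)
    ⟨-s, (hmem _).2 (by simpa using hs), by simpa using hsR⟩ hr (by simpa using ha) hlast
  simpa using h

end ExitDirection

theorem statement_19_general {n : ℕ} {g : MetricTensor n} {α μ : ℝ} (hα : 0 < sin α) (hμ : 0 < μ)
    (hg : IsAsympConical n g α μ) (R₀ : ℝ) {δ : ℝ} (hδ : 0 < δ) :
    ∃ R, R₀ ≤ R ∧ ∀ (γ : ℝ → En n) (a b r tm tp : ℝ), IsGeodesicOn (rdist g) γ 1 (Icc a b) →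
      (∃ t ∈ Icc a b, ‖γ t‖ ≤ R₀) → R < r → r ≤ ‖γ a‖ → r ≤ ‖γ b‖ →
      IsLeast {t | t ∈ Icc a b ∧ ‖γ t‖ = r} tm → IsGreatest {t | t ∈ Icc a b ∧ ‖γ t‖ = r} tp →
      ‖r⁻¹ • γ tm - NormedSpace.normalize (γ a)‖ +
        ‖r⁻¹ • γ tp - NormedSpace.normalize (γ b)‖ ≤ δ := by
  obtain ⟨R, hR, hentry⟩ := hg.exists_norm_entry_direction_sub_le hα hμ R₀ (half_pos hδ)
  obtain ⟨R', -, hexit⟩ := hg.exists_norm_exit_direction_sub_le hα hμ R₀ (half_pos hδ)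
  refine ⟨max R R', hR.trans (le_max_left _ _), fun γ a b r tm tp hγ hin hr ha hb htm htp => ?_⟩
  exact (add_le_add (hentry γ a b r tm hγ hin ((le_max_left _ _).trans_lt hr) ha htm)
    (hexit γ a b r tp hγ hin ((le_max_right _ _).trans_lt hr) hb htp)).trans_eq (add_halves δ)

end

/-- uniform non-twisting of the min-max geodesic segments.
In the setting of the min-max construction, with `Γ_ρ : [0, ℓ_g(Γ_ρ)] → M` the
arc-length parametrised min-max geodesic segments from `ρa` to `-ρa` and
`C_minmax = sup_ρ dist(Γ_ρ, o) < ∞`, for every `δ > 0` there is `R_δ` such that for all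
`r > R_δ` and `ρ > r`, the first entry time `t⁻` and last exit time `t⁺` of `Γ_ρ` on the
sphere `∂B(o,r)` satisfy `|Γ_ρ(t⁻)/r - a| + |Γ_ρ(t⁺)/r + a| ≤ δ`. -/
theorem statement_19
 (n : ℕ) (hn : 2 ≤ n) (g : MetricTensor n) (α μ ε Cs Rε Rκ : ℝ)
    (hα : α ∈ Set.Ioo 0 (π / 2))
    (hαk : ∀ k : ℕ, α ≠ Real.arcsin (1 / (2 * (k : ℝ) + 1)))
    (hμ : 0 < μ) (hg : IsAsympConical n g α μ)
    (hproper : ProperExpAll g)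
    (hε : 0 < ε) (hε' : ε < 1/2) (hCs : 1 ≤ Cs)
    (hεα : Real.sin (π / 2 * Real.sin α) ^ 2 < (1 - 5*Cs*ε)^2 / (1 + 5*Cs*ε)^2)
    (hRε : 0 < Rε)
    (hlen : ∀ γ : ℝ → En n, ContDiff ℝ 1 γ → (∀ t ∈ Set.Icc (0:ℝ) 1, Rε ≤ ‖γ t‖) →
      (1 - Cs*ε) * clen (coneMetric n α) γ 0 1 ≤ clen g γ 0 1 ∧
      clen g γ 0 1 ≤ (1 + Cs*ε) * clen (coneMetric n α) γ 0 1)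
    (hRκ : Rε ≤ Rκ)
    (hdist : ∀ x : En n, Rκ ≤ ‖x‖ →
      (1 - ε) * ‖x‖ ≤ rdist g 0 x ∧ rdist g 0 x ≤ (1 + ε) * ‖x‖)
    (hmins : ∀ x : En n, Rκ ≤ ‖x‖ → ∀ γ : ℝ → En n,
      IsMinSeg (coneDist n α) γ x (-x) → ∀ t ∈ Set.Icc (0:ℝ) 1, Rε ≤ ‖γ t‖)
    (a e : En n) (ha : ‖a‖ = 1) (he : ‖e‖ = 1) (hae : ⟪e, a⟫ = 0)
    (L : ℝ → En n → ℝ → En n)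
    (hL : ∀ ρ : ℝ, Rκ < ρ → ∀ ξ : En n, ‖ξ‖ = 1 → ⟪ξ, a⟫ = 0 →
      IsMinSeg (coneDist n α) (L ρ ξ) (ρ • a) (-(ρ • a)) ∧
      (∀ t ∈ Set.Icc (0:ℝ) 1, ∃ s r : ℝ, 0 ≤ r ∧ L ρ ξ t = s • a + r • ξ) ∧
      (∃ t ∈ Set.Icc (0:ℝ) 1, ∃ r : ℝ, 0 < r ∧ L ρ ξ t = r • ξ)) :
    let S : Set (En n) := {ξ | ‖ξ‖ = 1 ∧ ⟪ξ, a⟫ = 0}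
    let I : En n → En n := fun x => x - (2 * ⟪x, e⟫) • e
    let Mclass : ℝ → (En n → ℝ → ℝ → En n) → Prop := fun ρ H =>
      (∀ ξ ∈ S, ∀ s ∈ Set.Icc (0:ℝ) 1,
        ContDiff ℝ 1 (H ξ s) ∧ H ξ s 0 = ρ • a ∧ H ξ s 1 = -(ρ • a)) ∧
      (∀ ξ ∈ S, H ξ 0 = L ρ ξ ∧ H ξ 1 = L ρ (I ξ)) ∧
      ContinuousOn (fun z : En n × ℝ × ℝ => H z.1 z.2.1 z.2.2)
        (S ×ˢ (Set.Icc 0 1 ×ˢ Set.Icc 0 1))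
    let Λ : ℝ → ℝ := fun ρ => sInf {m : ℝ | ∃ H, Mclass ρ H ∧
      IsLUB {E : ℝ | ∃ ξ ∈ S, ∃ s ∈ Set.Icc (0:ℝ) 1, E = cenergy g (H ξ s) 0 1} m}
    ∀ (Γfam : ℝ → ℝ → En n) (T : ℝ → ℝ) (Cmm : ℝ),
      (∀ ρ : ℝ, Rκ < ρ → 0 < T ρ ∧
        Γfam ρ 0 = ρ • a ∧ Γfam ρ (T ρ) = -(ρ • a) ∧
        IsGeodesicOn (rdist g) (Γfam ρ) 1 (Set.Icc 0 (T ρ)) ∧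
        (T ρ)^2 = Λ ρ) →
      (∀ ρ : ℝ, Rκ < ρ → ∃ t ∈ Set.Icc 0 (T ρ), ‖Γfam ρ t‖ ≤ Cmm) →
      ∀ δ > (0:ℝ), ∃ Rδ : ℝ, max Rκ Cmm ≤ Rδ ∧
        ∀ r : ℝ, Rδ < r → ∀ ρ : ℝ, r < ρ → ∀ tm tp : ℝ,
          IsLeast {t : ℝ | t ∈ Set.Icc 0 (T ρ) ∧ ‖Γfam ρ t‖ = r} tm →
          IsGreatest {t : ℝ | t ∈ Set.Icc 0 (T ρ) ∧ ‖Γfam ρ t‖ = r} tp →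
          ‖r⁻¹ • Γfam ρ tm - a‖ + ‖r⁻¹ • Γfam ρ tp + a‖ ≤ δ := by
  intro S I Mclass Λ Γfam T Cmm hΓ hC δ hδ
  have hsin : 0 < sin α := sin_pos_of_pos_of_lt_pi hα.1 (by linarith [hα.2, pi_pos])
  obtain ⟨R, hR, h⟩ := statement_19_general hsin hμ hg (max Rκ Cmm) hδ
  refine ⟨R, hR, fun r hr ρ hρ tm tp htm htp => ?_⟩
  have hRκr : Rκ < r := (le_max_left _ _).trans_lt (hR.trans_lt hr)
  have hρ0 : 0 < ρ := (hRε.trans_le hRκ).trans (hRκr.trans hρ)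
  obtain ⟨-, h0, hT, hgeo, -⟩ := hΓ ρ (hRκr.trans hρ)
  obtain ⟨t, ht, htC⟩ := hC ρ (hRκr.trans hρ)
  have hnorm : ‖ρ • a‖ = ρ := by rw [norm_smul, ha, mul_one, norm_of_nonneg hρ0.le]
  simpa [h0, hT, NormedSpace.normalize_smul_of_pos hρ0,
    NormedSpace.normalize_eq_self_of_norm_eq_one ha] using
    h (Γfam ρ) 0 (T ρ) r tm tp hgeo ⟨t, ht, htC.trans (le_max_right _ _)⟩ hr
      (by rw [h0, hnorm]; exact hρ.le) (by rw [hT, norm_neg, hnorm]; exact hρ.le) htm htp
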